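/- arXiv:1811.03747 — 3 statements merged into one kernel-verified Lean document; each statement's English description precedes it below -/
import Mathlib

section
/- There exists n₀ such that for every n ≥ n₀, the balanced blow-up of the directed 5-cycle on n vertices, C⃗₅(n), is (up to isomorphism) the unique T⃗₃-free oriented graph on n vertices that maximizes the number of induced copies of P⃗₄ among all T⃗₃-free oriented graphs on n vertices. -/
open scoped Classical

/-- An oriented graph: the arc relation has no loops and no 2-cycles. -/
def IsOriented {V : Type*} (A : V → V → Prop) : Prop :=
  ∀ a b : V, A a b → ¬ A b a

/-- `T⃗₃`-freeness: no three vertices span the arcs a→b, b→c, a→c. -/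
def T3Free {V : Type*} (A : V → V → Prop) : Prop :=
  ∀ a b c : V, ¬ (A a b ∧ A b c ∧ A a c)

/-- `S` is the vertex set of an induced copy of the directed path `P⃗ₖ` in the
oriented graph with arc relation `A`. -/
def IsInducedPath {V : Type*} (A : V → V → Prop) (k : ℕ) (S : Finset V) : Prop :=
  ∃ f : Fin k → V, Function.Injective f ∧ (∀ v : V, v ∈ S ↔ ∃ i, f i = v) ∧
    ∀ i j : Fin k, A (f i) (f j) ↔ (j : ℕ) = (i : ℕ) + 1

/-- The number of induced copies of `P⃗ₖ`. -/
noncomputable def numPaths {V : Type*} [Fintype V] [DecidableEq V]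
    (A : V → V → Prop) (k : ℕ) : ℕ :=
  (Finset.univ.filter fun S : Finset V => IsInducedPath A k S).card

/-- The number of induced copies of `P⃗ₖ` containing all vertices of `T`. -/
noncomputable def numPathsThrough {V : Type*} [Fintype V] [DecidableEq V]
    (A : V → V → Prop) (k : ℕ) (T : Finset V) : ℕ :=
  (Finset.univ.filter fun S : Finset V => IsInducedPath A k S ∧ T ⊆ S).card

/-- The density of induced copies of `P⃗ₖ`. -/
noncomputable def pathDensity {V : Type*} [Fintype V] [DecidableEq V]
    (A : V → V → Prop) (k : ℕ) : ℝ :=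
  (numPaths A k : ℝ) / ((Fintype.card V).choose k : ℝ)

/-- The maximum density of induced copies of `P⃗ₖ` over all `T⃗₃`-free oriented
graphs on `n` vertices. -/
noncomputable def maxDensityT3 (k n : ℕ) : ℝ :=
  sSup {d : ℝ | ∃ A : Fin n → Fin n → Prop, IsOriented A ∧ T3Free A ∧ d = pathDensity A k}

/-- The maximum density of induced copies of `P⃗ₖ` over all oriented graphs on `n`
vertices. -/
noncomputable def maxDensityAll (k n : ℕ) : ℝ :=
  sSup {d : ℝ | ∃ A : Fin n → Fin n → Prop, IsOriented A ∧ d = pathDensity A k}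

/-- `S` is the vertex set of an induced copy of the oriented graph `H` in the
oriented graph with arc relation `A`. -/
def IsInducedCopy {V W : Type*} (H : W → W → Prop) (A : V → V → Prop) (S : Finset V) : Prop :=
  ∃ f : W → V, Function.Injective f ∧ (∀ v : V, v ∈ S ↔ ∃ w, f w = v) ∧
    ∀ a b : W, A (f a) (f b) ↔ H a b

/-- The number of induced copies of `H` in `A`. -/
noncomputable def numCopies {V W : Type*} [Fintype V] [DecidableEq V]
    (H : W → W → Prop) (A : V → V → Prop) : ℕ :=
  (Finset.univ.filter fun S : Finset V => IsInducedCopy H A S).card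

/-- The number of (unordered) pairs of vertices on which the two oriented graphs `A`
and `B` differ (an arc must be added, removed, or reoriented). -/
noncomputable def pairDiff {V : Type*} [Fintype V] [LinearOrder V]
    (A B : V → V → Prop) : ℕ :=
  (Finset.univ.filter fun p : V × V => p.1 < p.2 ∧
    ¬ ((A p.1 p.2 ↔ B p.1 p.2) ∧ (A p.2 p.1 ↔ B p.2 p.1))).card

/-- `A` is a blow-up of the directed 5-cycle with parts given by the fibers of `g`. -/
def IsBlowupC5 {V : Type*} (A : V → V → Prop) (g : V → Fin 5) : Prop :=
  ∀ u v : V, A u v ↔ g v = g u + 1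

/-- The size of the part of vertices mapped to `i`. -/
noncomputable def partSize {V : Type*} [Fintype V] {m : ℕ} (g : V → Fin m) (i : Fin m) : ℕ :=
  (Finset.univ.filter fun v : V => g v = i).card

/-- `A` is a balanced blow-up of the directed 5-cycle, i.e. isomorphic to `C⃗₅(n)`. -/
def IsBalancedBlowupC5 {V : Type*} [Fintype V] (A : V → V → Prop) : Prop :=
  ∃ g : V → Fin 5, IsBlowupC5 A g ∧
    ∀ i j : Fin 5, (partSize g i : ℤ) - (partSize g j : ℤ) ≤ 1

/-! ### The flag-algebra certificate -/

/-- Reversal of an arc status (`0` = no arc, `1` = forward arc, `2` = backward arc). -/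
def rv (d : ℕ) : ℕ := (3 - d) % 3

/-- `triOK x y z = true` iff the statuses `ij, ik, jk` do not form a transitive triangle. -/
def triOK (x y z : ℕ) : Bool := Nat.beq ((29204479 >>> (9 * x + 3 * y + z)) % 2) 1

/-- Class of a vertex relative to an induced path `a → b → c`, `5` being undefined. -/
def cl1 (x y z : ℕ) : ℕ := (108172851214753209041146866902325 >>> (4 * (9 * x + 3 * y + z))) % 16

/-- The isomorphism class of a flag on three vertices with one root. -/
def cl6 (x y z : ℕ) : ℕ := (19905199817833878236038862439 >>> (4 * (9 * x + 3 * y + z))) % 16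

/-- Matrix for the path type, shifted by `10000`. -/
def q1 (i j : ℕ) : ℕ :=
  (37740200128512519342605542290068643881923978807786388601216575621474174007342262427953425031654531193953416534282757681362049955626880799391112956155368392553734830283175250 >>> (16 * (6 * i + j))) % 65536

/-- Matrix for the one-vertex type, shifted by `10000`. -/
def q6 (i j : ℕ) : ℕ :=
  (881620055622737057178431031806485235366252927187962839933908282387690146705201963592762326542976474026144078975877806434758703687996853311148044244035421544277983749832610140089737844836084758371635159024375975501403011443241135896825181778997038629669586479586300314435293231230757633484736548737780243599624920204327823599145500696155396196885065308035019967804728003937720675697858793632055174000453360690307055337318530651962861111212755260072404875007749380021938785460944753558610150491995903190747129705671914836612235708535641682414730104673481474639240821380008794900243794863651263582464380879842297007180271744887800022194245901302254282628925892992619410180611692840405200781982960 >>> (16 * (12 * i + j))) % 65536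

/-- Is `a → b → c` an induced path, in terms of the statuses `ab, ac, bc`. -/
def isP3 (x y z : ℕ) : Bool := Nat.beq x 1 && (Nat.beq y 0 && Nat.beq z 1)

/-- Path type term; arguments: statuses `ab ac bc au bu cu aw bw cw`. -/
def t1 (x y z au bu cu aw bw cw : ℕ) : ℕ :=
  cond (isP3 x y z) (q1 (cl1 au bu cu) (cl1 aw bw cw)) 10000

/-- One-vertex type term; arguments: statuses `ru rv uv rx ry xy`. -/
def t6 (ru rw uw rx ry xy : ℕ) : ℕ := q6 (cl6 ru rw uw) (cl6 rx ry xy)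

/-- The expected status between vertices of classes `i` and `j`. -/
def expSt (i j : ℕ) : ℕ :=
  cond (Nat.beq ((i + 1) % 5) j) 1 (cond (Nat.beq ((j + 1) % 5) i) 2 0)

/-- Goodness of the pair `u, w` relative to the path `a → b → c`. -/
def goodC (au bu cu aw bw cw uw : ℕ) : Bool :=
  Nat.blt (cl1 au bu cu) 5 && (Nat.blt (cl1 aw bw cw) 5 &&
    Nat.beq (expSt (cl1 au bu cu) (cl1 aw bw cw)) uw)

/-- Badness indicator of a five-tuple. -/
def badC (x y z au bu cu aw bw cw uw : ℕ) : ℕ :=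
  cond (isP3 x y z && !(goodC au bu cu aw bw cw uw)) 1 0

/-- Sum of the terms of the path type. -/
def sum1 (d01 d02 d12 d03 d13 d23 d04 d14 d24 d34 : ℕ) : ℕ :=
  t1 d01 d02 d12 d03 d13 d23 d04 d14 d24 +
  t1 d01 d03 d13 d02 d12 (rv d23) d04 d14 d34 +
  t1 d01 d04 d14 d02 d12 (rv d24) d03 d13 (rv d34) +
  t1 d02 d01 (rv d12) d03 d23 d13 d04 d24 d14 +
  t1 d02 d03 d23 d01 (rv d12) (rv d13) d04 d24 d34 +
  t1 d02 d04 d24 d01 (rv d12) (rv d14) d03 d23 (rv d34) +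
  t1 d03 d01 (rv d13) d02 (rv d23) d12 d04 d34 d14 +
  t1 d03 d02 (rv d23) d01 (rv d13) (rv d12) d04 d34 d24 +
  t1 d03 d04 d34 d01 (rv d13) (rv d14) d02 (rv d23) (rv d24) +
  t1 d04 d01 (rv d14) d02 (rv d24) d12 d03 (rv d34) d13 +
  t1 d04 d02 (rv d24) d01 (rv d14) (rv d12) d03 (rv d34) d23 +
  t1 d04 d03 (rv d34) d01 (rv d14) (rv d13) d02 (rv d24) (rv d23) +
  t1 (rv d01) d12 d02 d13 d03 d23 d14 d04 d24 +
  t1 (rv d01) d13 d03 d12 d02 (rv d23) d14 d04 d34 +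
  t1 (rv d01) d14 d04 d12 d02 (rv d24) d13 d03 (rv d34) +
  t1 d12 (rv d01) (rv d02) d13 d23 d03 d14 d24 d04 +
  t1 d12 d13 d23 (rv d01) (rv d02) (rv d03) d14 d24 d34 +
  t1 d12 d14 d24 (rv d01) (rv d02) (rv d04) d13 d23 (rv d34) +
  t1 d13 (rv d01) (rv d03) d12 (rv d23) d02 d14 d34 d04 +
  t1 d13 d12 (rv d23) (rv d01) (rv d03) (rv d02) d14 d34 d24 +
  t1 d13 d14 d34 (rv d01) (rv d03) (rv d04) d12 (rv d23) (rv d24) +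
  t1 d14 (rv d01) (rv d04) d12 (rv d24) d02 d13 (rv d34) d03 +
  t1 d14 d12 (rv d24) (rv d01) (rv d04) (rv d02) d13 (rv d34) d23 +
  t1 d14 d13 (rv d34) (rv d01) (rv d04) (rv d03) d12 (rv d24) (rv d23) +
  t1 (rv d02) (rv d12) d01 d23 d03 d13 d24 d04 d14 +
  t1 (rv d02) d23 d03 (rv d12) d01 (rv d13) d24 d04 d34 +
  t1 (rv d02) d24 d04 (rv d12) d01 (rv d14) d23 d03 (rv d34) +
  t1 (rv d12) (rv d02) (rv d01) d23 d13 d03 d24 d14 d04 +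
  t1 (rv d12) d23 d13 (rv d02) (rv d01) (rv d03) d24 d14 d34 +
  t1 (rv d12) d24 d14 (rv d02) (rv d01) (rv d04) d23 d13 (rv d34) +
  t1 d23 (rv d02) (rv d03) (rv d12) (rv d13) d01 d24 d34 d04 +
  t1 d23 (rv d12) (rv d13) (rv d02) (rv d03) (rv d01) d24 d34 d14 +
  t1 d23 d24 d34 (rv d02) (rv d03) (rv d04) (rv d12) (rv d13) (rv d14) +
  t1 d24 (rv d02) (rv d04) (rv d12) (rv d14) d01 d23 (rv d34) d03 +
  t1 d24 (rv d12) (rv d14) (rv d02) (rv d04) (rv d01) d23 (rv d34) d13 +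
  t1 d24 d23 (rv d34) (rv d02) (rv d04) (rv d03) (rv d12) (rv d14) (rv d13) +
  t1 (rv d03) (rv d13) d01 (rv d23) d02 d12 d34 d04 d14 +
  t1 (rv d03) (rv d23) d02 (rv d13) d01 (rv d12) d34 d04 d24 +
  t1 (rv d03) d34 d04 (rv d13) d01 (rv d14) (rv d23) d02 (rv d24) +
  t1 (rv d13) (rv d03) (rv d01) (rv d23) d12 d02 d34 d14 d04 +
  t1 (rv d13) (rv d23) d12 (rv d03) (rv d01) (rv d02) d34 d14 d24 +
  t1 (rv d13) d34 d14 (rv d03) (rv d01) (rv d04) (rv d23) d12 (rv d24) +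
  t1 (rv d23) (rv d03) (rv d02) (rv d13) (rv d12) d01 d34 d24 d04 +
  t1 (rv d23) (rv d13) (rv d12) (rv d03) (rv d02) (rv d01) d34 d24 d14 +
  t1 (rv d23) d34 d24 (rv d03) (rv d02) (rv d04) (rv d13) (rv d12) (rv d14) +
  t1 d34 (rv d03) (rv d04) (rv d13) (rv d14) d01 (rv d23) (rv d24) d02 +
  t1 d34 (rv d13) (rv d14) (rv d03) (rv d04) (rv d01) (rv d23) (rv d24) d12 +
  t1 d34 (rv d23) (rv d24) (rv d03) (rv d04) (rv d02) (rv d13) (rv d14) (rv d12) +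
  t1 (rv d04) (rv d14) d01 (rv d24) d02 d12 (rv d34) d03 d13 +
  t1 (rv d04) (rv d24) d02 (rv d14) d01 (rv d12) (rv d34) d03 d23 +
  t1 (rv d04) (rv d34) d03 (rv d14) d01 (rv d13) (rv d24) d02 (rv d23) +
  t1 (rv d14) (rv d04) (rv d01) (rv d24) d12 d02 (rv d34) d13 d03 +
  t1 (rv d14) (rv d24) d12 (rv d04) (rv d01) (rv d02) (rv d34) d13 d23 +
  t1 (rv d14) (rv d34) d13 (rv d04) (rv d01) (rv d03) (rv d24) d12 (rv d23) +
  t1 (rv d24) (rv d04) (rv d02) (rv d14) (rv d12) d01 (rv d34) d23 d03 +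
  t1 (rv d24) (rv d14) (rv d12) (rv d04) (rv d02) (rv d01) (rv d34) d23 d13 +
  t1 (rv d24) (rv d34) d23 (rv d04) (rv d02) (rv d03) (rv d14) (rv d12) (rv d13) +
  t1 (rv d34) (rv d04) (rv d03) (rv d14) (rv d13) d01 (rv d24) (rv d23) d02 +
  t1 (rv d34) (rv d14) (rv d13) (rv d04) (rv d03) (rv d01) (rv d24) (rv d23) d12 +
  t1 (rv d34) (rv d24) (rv d23) (rv d04) (rv d03) (rv d02) (rv d14) (rv d13) (rv d12)

/-- Sum of the terms of the one-vertex type. -/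
def sum6 (d01 d02 d12 d03 d13 d23 d04 d14 d24 d34 : ℕ) : ℕ :=
  t6 d01 d02 d12 d03 d04 d34 +
  t6 d01 d03 d13 d02 d04 d24 +
  t6 d01 d04 d14 d02 d03 d23 +
  t6 (rv d01) d12 d02 d13 d14 d34 +
  t6 (rv d01) d13 d03 d12 d14 d24 +
  t6 (rv d01) d14 d04 d12 d13 d23 +
  t6 (rv d02) (rv d12) d01 d23 d24 d34 +
  t6 (rv d02) d23 d03 (rv d12) d24 d14 +
  t6 (rv d02) d24 d04 (rv d12) d23 d13 +
  t6 (rv d03) (rv d13) d01 (rv d23) d34 d24 +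
  t6 (rv d03) (rv d23) d02 (rv d13) d34 d14 +
  t6 (rv d03) d34 d04 (rv d13) (rv d23) d12 +
  t6 (rv d04) (rv d14) d01 (rv d24) (rv d34) d23 +
  t6 (rv d04) (rv d24) d02 (rv d14) (rv d34) d13 +
  t6 (rv d04) (rv d34) d03 (rv d14) (rv d24) d12

/-- The inequality to be checked for each five-vertex graph. -/
def okC (d01 d02 d12 d03 d13 d23 d04 d14 d24 d34 : ℕ) : Bool :=
  Nat.ble (sum1 d01 d02 d12 d03 d13 d23 d04 d14 d24 d34 + sum6 d01 d02 d12 d03 d13 d23 d04 d14 d24 d34 +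
    badC d01 d02 d12 d03 d13 d23 d04 d14 d24 d34) 761520

/-- Conjunction over the three statuses. -/
def all3 (f : ℕ → Bool) : Bool := f 0 && (f 1 && f 2)

/-- The complete check over all `T₃`-free oriented graphs on five labelled vertices. -/
def checkAll : Bool :=
  all3 fun d01 => all3 fun d02 => all3 fun d12 => !(triOK d01 d02 d12) ||
  (all3 fun d03 => all3 fun d13 => !(triOK d01 d03 d13) ||
  (all3 fun d23 => !(triOK d02 d03 d23) || (!(triOK d12 d13 d23) ||
  (all3 fun d04 => all3 fun d14 => !(triOK d01 d04 d14) ||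
  (all3 fun d24 => !(triOK d02 d04 d24) || (!(triOK d12 d14 d24) ||
  (all3 fun d34 => !(triOK d03 d04 d34) || (!(triOK d13 d14 d34) || (!(triOK d23 d24 d34) ||
    okC d01 d02 d12 d03 d13 d23 d04 d14 d24 d34)))))))))

theorem checkAll_eq : checkAll = true := by decide +kernel


def W1 : List (List ℤ) := [[73, -11, -39, -35, 12], [0, -1693, -2087, -1405, 5185], [0, -135907, 210807, -74900, 0], [0, -1, 0, 1, 0]]
def D1 : List ℤ := [10930342950, 2108070, 730, 36601437285050]
def W6 : List (List ℤ) :=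
  [[14, 2, 7, -1, 2, 8, -7, 0, -10, -1, -4, -2],
    [0, 255, -21, 65, 73, -51, 0, -42, 13, -89, 43, -136],
    [0, 0, 2424, -800, -10680, -19040, 13243, 4848, -7385, -483, -2020, -5814],
    [0, 0, 0, 570400, -267200, -210475, 199100, 0, -150822, -123554, -161095, -247108],
    [0, 0, 0, 0, 7930480, 1924990, -983855, 0, 1107857, 147379, -2343750, 294758],
    [0, 0, 0, 0, 0, 11952423195, -488546784, 0, -7999007470, -350075930, -2764717081, -700151860],
    [0, 0, 0, 0, 0, 0, 75946194706509, 0, -17450773349575, -39994931570165, 21494441783396, -79989863140330],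
    [0, 0, 0, 0, 0, 0, 0, 0, 31172327038663174, -7314174160797607, -16543978717067960, -14628348321595214],
    [0, 0, 0, 0, 0, 0, 0, 0, 0, 1, -2, 2]]
def D6 : List ℤ := [2616382309848194285217733753108506897887115503927520000, 10260322783718408961638171580817674109361237270304000, 2222223375186536594414207953766204169725515497900, 529842880479258374544762064712839703861623611, 5398324533032562551474409471910583983821810, 2415204010887737667994226726427573405, 18915095593285275942586762370, 103664199925433268299536, 11396620677216048443722375130621967241905637433115375600]

/-! ### Statuses -/

/-- The status of an ordered pair. -/
noncomputable def st {V : Type*} (A : V → V → Prop) (x y : V) : ℕ :=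
  if A x y then 1 else if A y x then 2 else 0

section statuses

variable {V : Type*} {A : V → V → Prop}

theorem st_lt (x y : V) : st A x y < 3 := by
  unfold st; split_ifs <;> norm_num

theorem st_eq_one (x y : V) : st A x y = 1 ↔ A x y := by
  unfold st; split_ifs <;> simp_all

theorem st_eq_zero (x y : V) : st A x y = 0 ↔ ¬ A x y ∧ ¬ A y x := by
  unfold st; split_ifs <;> simp_all

theorem st_eq_two (hA : IsOriented A) (x y : V) : st A x y = 2 ↔ A y x := by
  have := hA x y
  unfold st; split_ifs <;> simp_all

theorem rv_st (hA : IsOriented A) (x y : V) : rv (st A x y) = st A y x := by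
  have := hA x y
  unfold st rv; split_ifs <;> simp_all

theorem triOK_st (hA : IsOriented A) (hT : T3Free A) (x y z : V) :
    triOK (st A x y) (st A x z) (st A y z) = true := by
  have key : ∀ d₁ d₂ d₃ : Fin 3, triOK d₁ d₂ d₃ = false →
      (d₁ = 1 ∧ d₃ = 1 ∧ d₂ = 1) ∨ (d₂ = 1 ∧ d₃ = 2 ∧ d₁ = 1) ∨ (d₁ = 2 ∧ d₂ = 1 ∧ d₃ = 1) ∨
      (d₃ = 1 ∧ d₂ = 2 ∧ d₁ = 2) ∨ (d₂ = 2 ∧ d₁ = 1 ∧ d₃ = 2) ∨ (d₃ = 2 ∧ d₁ = 2 ∧ d₂ = 2) := by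
    decide
  by_contra h
  have h' := key ⟨_, st_lt x y⟩ ⟨_, st_lt x z⟩ ⟨_, st_lt y z⟩ (by simpa using h)
  simp only [Fin.ext_iff, Fin.val_one, Fin.val_two, st_eq_one, st_eq_two hA] at h'
  have t := fun a b c => hT a b c
  rcases h' with h' | h' | h' | h' | h' | h'
  · exact t x y z h'
  · exact t x z y h'
  · exact t y x z h'
  · exact t y z x h'
  · exact t z x y h'
  · exact t z y x h'

theorem all3_spec {f : ℕ → Bool} (h : all3 f = true) {d : ℕ} (hd : d < 3) : f d = true := by
  simp only [all3, Bool.and_eq_true] at h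
  interval_cases d
  · exact h.1
  · exact h.2.1
  · exact h.2.2

theorem imp_spec {a b : Bool} (h : (!a || b) = true) (ha : a = true) : b = true := by
  subst ha; simpa using h

theorem okC_st (hA : IsOriented A) (hT : T3Free A) (x0 x1 x2 x3 x4 : V) :
    okC (st A x0 x1) (st A x0 x2) (st A x1 x2) (st A x0 x3) (st A x1 x3) (st A x2 x3)
      (st A x0 x4) (st A x1 x4) (st A x2 x4) (st A x3 x4) = true := by
  have h := checkAll_eq
  unfold checkAll at h
  replace h := all3_spec h (st_lt (A := A) x0 x1)
  replace h := all3_spec h (st_lt (A := A) x0 x2)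
  replace h := all3_spec h (st_lt (A := A) x1 x2)
  replace h := imp_spec h (triOK_st hA hT x0 x1 x2)
  replace h := all3_spec h (st_lt (A := A) x0 x3)
  replace h := all3_spec h (st_lt (A := A) x1 x3)
  replace h := imp_spec h (triOK_st hA hT x0 x1 x3)
  replace h := all3_spec h (st_lt (A := A) x2 x3)
  replace h := imp_spec h (triOK_st hA hT x0 x2 x3)
  replace h := imp_spec h (triOK_st hA hT x1 x2 x3)
  replace h := all3_spec h (st_lt (A := A) x0 x4)
  replace h := all3_spec h (st_lt (A := A) x1 x4)
  replace h := imp_spec h (triOK_st hA hT x0 x1 x4)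
  replace h := all3_spec h (st_lt (A := A) x2 x4)
  replace h := imp_spec h (triOK_st hA hT x0 x2 x4)
  replace h := imp_spec h (triOK_st hA hT x1 x2 x4)
  replace h := all3_spec h (st_lt (A := A) x3 x4)
  replace h := imp_spec h (triOK_st hA hT x0 x3 x4)
  replace h := imp_spec h (triOK_st hA hT x1 x3 x4)
  exact imp_spec h (triOK_st hA hT x2 x3 x4)

end statuses

section sums

variable {V : Type*} [Fintype V] (A : V → V → Prop)

/-- Path type term of a tuple of vertices. -/
noncomputable def G1 (a b c u w : V) : ℕ :=
  t1 (st A a b) (st A a c) (st A b c) (st A a u) (st A b u) (st A c u)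
    (st A a w) (st A b w) (st A c w)

/-- One-vertex type term of a tuple of vertices. -/
noncomputable def G6 (r u w x y : V) : ℕ :=
  t6 (st A r u) (st A r w) (st A u w) (st A r x) (st A r y) (st A x y)

/-- Badness indicator of a tuple of vertices. -/
noncomputable def GB (a b c u w : V) : ℕ :=
  badC (st A a b) (st A a c) (st A b c) (st A a u) (st A b u) (st A c u)
    (st A a w) (st A b w) (st A c w) (st A u w)

/-- Sum over all five-tuples. -/
def S5 (F : V → V → V → V → V → ℕ) : ℕ := ∑ v : Fin 5 → V, F (v 0) (v 1) (v 2) (v 3) (v 4)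

theorem S5_perm (F : V → V → V → V → V → ℕ) (i j k l m : Fin 5)
    (h : Function.Bijective ![i, j, k, l, m]) :
    ∑ v : Fin 5 → V, F (v i) (v j) (v k) (v l) (v m) = S5 F := by
  unfold S5
  refine Fintype.sum_equiv (Equiv.arrowCongr (Equiv.ofBijective _ h).symm (Equiv.refl V)) _ _ ?_
  intro v
  simp [Equiv.arrowCongr]

theorem S5_eq (F : V → V → V → V → V → ℕ) :
    S5 F = ∑ a, ∑ b, ∑ c, ∑ u, ∑ w, F a b c u w := by
  have h : S5 F = ∑ p : V × V × V × V × V, F p.1 p.2.1 p.2.2.1 p.2.2.2.1 p.2.2.2.2 := by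
    unfold S5
    refine Fintype.sum_equiv ⟨fun v => (v 0, v 1, v 2, v 3, v 4),
      fun p => ![p.1, p.2.1, p.2.2.1, p.2.2.2.1, p.2.2.2.2], ?_, ?_⟩ _ _ ?_
    · intro v; ext i; fin_cases i <;> rfl
    · rintro ⟨a, b, c, d, e⟩; rfl
    · intro v; rfl
  rw [h]
  simp only [Fintype.sum_prod_type]

theorem main_sum (hA : IsOriented A) (hT : T3Free A) :
    60 * S5 (G1 A) + 15 * S5 (G6 A) + S5 (GB A) ≤ 761520 * Fintype.card V ^ 5 := by
  have h : ∀ v : Fin 5 → V, _ := fun v =>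
    Nat.le_of_ble_eq_true (okC_st hA hT (v 0) (v 1) (v 2) (v 3) (v 4))
  have h2 := Finset.sum_le_sum fun v (_ : v ∈ (Finset.univ : Finset (Fin 5 → V))) => h v
  have e1 : ∀ a b c u w : V, t1 (st A a b) (st A a c) (st A b c) (st A a u) (st A b u) (st A c u)
    (st A a w) (st A b w) (st A c w) = G1 A a b c u w := fun _ _ _ _ _ => rfl
  have e6 : ∀ r u w x y : V, t6 (st A r u) (st A r w) (st A u w) (st A r x) (st A r y)
    (st A x y) = G6 A r u w x y := fun _ _ _ _ _ => rfl
  have eB : ∀ a b c u w : V, badC (st A a b) (st A a c) (st A b c) (st A a u) (st A b u)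
    (st A c u) (st A a w) (st A b w) (st A c w) (st A u w) = GB A a b c u w :=
    fun _ _ _ _ _ => rfl
  simp only [sum1, sum6, rv_st hA, e1, e6, eB, Finset.sum_add_distrib] at h2
  simp (discharger := decide) only [S5_perm (G1 A), S5_perm (G6 A), S5_perm (GB A)] at h2
  simp only [Finset.sum_const, Finset.card_univ, Fintype.card_fun, Fintype.card_fin,
    smul_eq_mul] at h2
  clear h e1 e6 eB
  generalize S5 (G1 A) = x at *
  generalize S5 (G6 A) = y at *
  generalize S5 (GB A) = z at *
  generalize Fintype.card V ^ 5 = t at *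
  omega

end sums

/-! ### Positive semidefiniteness -/

theorem psd_aux {V : Type*} [Fintype V] (L : List (ℤ × List ℤ)) (hL : ∀ p ∈ L, 0 ≤ p.1)
    (c : V → ℕ) :
    0 ≤ ∑ u, ∑ w, (L.map fun p => p.1 * p.2.getD (c u) 0 * p.2.getD (c w) 0).sum := by
  induction L with
  | nil => simp
  | cons p L ih =>
    simp only [List.map_cons, List.sum_cons, Finset.sum_add_distrib]
    have e : ∑ u, ∑ w, p.1 * p.2.getD (c u) 0 * p.2.getD (c w) 0
        = p.1 * (∑ u, p.2.getD (c u) 0) ^ 2 := by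
      rw [sq, Finset.sum_mul_sum, Finset.mul_sum]
      simp only [Finset.mul_sum, mul_assoc]
    rw [e]
    have h1 : 0 ≤ p.1 := hL p (by simp)
    have h2 := ih fun q hq => hL q (by simp [hq])
    positivity

theorem psd {V : Type*} [Fintype V] (N : ℤ) (hN : 0 < N) (L : List (ℤ × List ℤ))
    (hL : ∀ p ∈ L, 0 ≤ p.1) (m : ℕ) (Q : ℕ → ℕ → ℤ)
    (hQ : ∀ i j : Fin m, N * Q i j = (L.map fun p => p.1 * p.2.getD i 0 * p.2.getD j 0).sum)
    (c : V → ℕ) (hc : ∀ v, c v < m) : 0 ≤ ∑ u, ∑ w, Q (c u) (c w) := by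
  have h := psd_aux L hL c
  have e : ∑ u, ∑ w, (L.map fun p => p.1 * p.2.getD (c u) 0 * p.2.getD (c w) 0).sum
      = N * ∑ u, ∑ w, Q (c u) (c w) := by
    simp only [Finset.mul_sum]
    refine Finset.sum_congr rfl fun u _ => Finset.sum_congr rfl fun w _ => ?_
    exact (hQ ⟨_, hc u⟩ ⟨_, hc w⟩).symm
  rw [e] at h
  exact nonneg_of_mul_nonneg_right h hN

/-- Indicator of class `3`. -/
def i3 (i : ℕ) : ℤ := if i = 3 then 1 else 0

theorem cert1 : ∀ i j : Fin 6, (15958300707 : ℤ) * ((q1 i j : ℤ) - 10000 - 12000 * (i3 i + i3 j))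
    = ((D1.zip W1).map fun p => p.1 * p.2.getD i 0 * p.2.getD j 0).sum := by
  decide +kernel

theorem cert6 : ∀ i j : Fin 12,
    (91573380844686799982620681358797741426049042637463200 : ℤ) * ((q6 i j : ℤ) - 10000)
    = ((D6.zip W6).map fun p => p.1 * p.2.getD i 0 * p.2.getD j 0).sum := by
  decide +kernel

theorem cl1_lt : ∀ x y z : Fin 3, cl1 x y z < 6 := by decide +kernel

theorem cl6_lt : ∀ x y z : Fin 3, cl6 x y z < 12 := by decide +kernel

theorem pos1 : ∀ p ∈ D1.zip W1, 0 ≤ p.1 := by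
  have h : ∀ d ∈ D1, 0 ≤ d := by decide +kernel
  exact fun p hp => h _ (List.of_mem_zip hp).1

theorem pos6 : ∀ p ∈ D6.zip W6, 0 ≤ p.1 := by
  have h : ∀ d ∈ D6, 0 ≤ d := by decide +kernel
  exact fun p hp => h _ (List.of_mem_zip hp).1

section bounds

variable {V : Type*} [Fintype V] (A : V → V → Prop)

/-- The number of induced paths, counted as ordered quadruples. -/
noncomputable def cnt4 : ℕ := ∑ a, ∑ b, ∑ c, ∑ u,
  if isP3 (st A a b) (st A a c) (st A b c) = true ∧ cl1 (st A a u) (st A b u) (st A c u) = 3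
    then 1 else 0

theorem S6_bound : 10000 * Fintype.card V ^ 5 ≤ S5 (G6 A) := by
  rw [S5_eq]
  have h : ∀ r : V, 10000 * Fintype.card V ^ 4 ≤ ∑ u, ∑ w, ∑ x, ∑ y, G6 A r u w x y := by
    intro r
    have h1 := psd (V := V × V) _ (by norm_num) _ pos6 12 (fun i j => (q6 i j : ℤ) - 10000) cert6
      (fun p => cl6 (st A r p.1) (st A r p.2) (st A p.1 p.2))
      (fun p => cl6_lt ⟨_, st_lt _ _⟩ ⟨_, st_lt _ _⟩ ⟨_, st_lt _ _⟩)
    simp only [Fintype.sum_prod_type, Finset.sum_sub_distrib, Finset.sum_const, Finset.card_univ,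
      nsmul_eq_mul, Fintype.card_prod] at h1
    push_cast at h1
    zify
    simp only [G6, t6]
    linarith
  have h2 := Finset.sum_le_sum fun r (_ : r ∈ (Finset.univ : Finset V)) => h r
  simp only [Finset.sum_const, Finset.card_univ, smul_eq_mul] at h2
  calc _ = Fintype.card V * (10000 * Fintype.card V ^ 4) := by ring
    _ ≤ _ := h2

theorem S1_bound : 10000 * Fintype.card V ^ 5 + 24000 * Fintype.card V * cnt4 A ≤ S5 (G1 A) := by
  rw [S5_eq]
  have h : ∀ a b c : V, 10000 * Fintype.card V ^ 2 + 24000 * Fintype.card V *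
      (∑ u, if isP3 (st A a b) (st A a c) (st A b c) = true ∧
        cl1 (st A a u) (st A b u) (st A c u) = 3 then 1 else 0) ≤ ∑ u, ∑ w, G1 A a b c u w := by
    intro a b c
    by_cases hp : isP3 (st A a b) (st A a c) (st A b c) = true
    · have h1 := psd (V := V) _ (by norm_num) _ pos1 6
        (fun i j => (q1 i j : ℤ) - 10000 - 12000 * (i3 i + i3 j)) cert1
        (fun u => cl1 (st A a u) (st A b u) (st A c u))
        (fun u => cl1_lt ⟨_, st_lt _ _⟩ ⟨_, st_lt _ _⟩ ⟨_, st_lt _ _⟩)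
      simp only [Finset.sum_sub_distrib, Finset.sum_const, Finset.card_univ, ← Finset.mul_sum,
        Finset.sum_add_distrib, nsmul_eq_mul] at h1
      simp only [G1, t1, hp, cond_true, true_and]
      have e : ∑ u, i3 (cl1 (st A a u) (st A b u) (st A c u)) =
          ((∑ u, if cl1 (st A a u) (st A b u) (st A c u) = 3 then 1 else 0 : ℕ) : ℤ) := by
        rw [Nat.cast_sum]
        refine Finset.sum_congr rfl fun u _ => ?_
        unfold i3
        split_ifs <;> rfl
      rw [e] at h1
      generalize (∑ u, if cl1 (st A a u) (st A b u) (st A c u) = 3 then 1 else 0 : ℕ) = X at *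
      zify
      linarith
    · have e1 : ∀ u w, G1 A a b c u w = 10000 := by
        intro u w
        unfold G1 t1
        rw [Bool.eq_false_iff.2 hp, cond_false]
      have e2 : ∀ u, (if isP3 (st A a b) (st A a c) (st A b c) = true ∧
        cl1 (st A a u) (st A b u) (st A c u) = 3 then 1 else 0) = 0 :=
        fun u => if_neg fun h => hp h.1
      rw [Finset.sum_congr rfl fun u _ => e2 u,
        Finset.sum_congr rfl fun u _ => Finset.sum_congr rfl fun w _ => e1 u w]
      rw [Finset.sum_const_zero, Finset.sum_const, Finset.sum_const, Finset.card_univ,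
        smul_eq_mul, smul_eq_mul]
      apply le_of_eq; ring
  have h2 := Finset.sum_le_sum fun a (_ : a ∈ (Finset.univ : Finset V)) =>
    Finset.sum_le_sum fun b (_ : b ∈ (Finset.univ : Finset V)) =>
    Finset.sum_le_sum fun c (_ : c ∈ (Finset.univ : Finset V)) => h a b c
  refine le_trans (le_of_eq ?_) h2
  simp only [Finset.sum_add_distrib, ← Finset.mul_sum, Finset.sum_const, Finset.card_univ,
    smul_eq_mul, cnt4]
  ring

/-- The main inequality. -/
theorem bad_bound (hA : IsOriented A) (hT : T3Free A) :
    S5 (GB A) + 1440000 * Fintype.card V * cnt4 A ≤ 11520 * Fintype.card V ^ 5 := by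
  have h1 := S1_bound A
  have h6 := S6_bound A
  have h := main_sum A hA hT
  have e : 24000 * Fintype.card V * cnt4 A = 24000 * (Fintype.card V * cnt4 A) := by ring
  have e' : 1440000 * Fintype.card V * cnt4 A = 1440000 * (Fintype.card V * cnt4 A) := by ring
  rw [e'] 
  rw [e] at h1
  omega

end bounds

/-! ### Counting paths by tuples -/

section tuples

variable {V : Type*} [Fintype V] (A : V → V → Prop)

/-- Ordered quadruples forming an induced path. -/
noncomputable def PT : Finset (Fin 4 → V) :=
  Finset.univ.filter fun f => ∀ i j : Fin 4, A (f i) (f j) ↔ (j : ℕ) = (i : ℕ) + 1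

theorem mem_PT {f : Fin 4 → V} :
    f ∈ PT A ↔ ∀ i j : Fin 4, A (f i) (f j) ↔ (j : ℕ) = (i : ℕ) + 1 := by
  simp [PT]

theorem PT_inj {f : Fin 4 → V} (hf : f ∈ PT A) : Function.Injective f := by
  rw [mem_PT] at hf
  intro i j hij
  have key : ∀ i j : Fin 4, (∀ k : Fin 4, ((k : ℕ) = i + 1 ↔ (k : ℕ) = j + 1) ∧
      ((i : ℕ) = k + 1 ↔ (j : ℕ) = k + 1)) → i = j := by decide
  apply key
  intro k
  rw [← hf i k, ← hf j k, ← hf k i, ← hf k j, hij]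
  exact ⟨Iff.rfl, Iff.rfl⟩

theorem numPaths_eq [DecidableEq V] : numPaths A 4 = (PT A).card := by
  unfold numPaths
  symm
  refine Finset.card_bij (fun f _ => Finset.univ.image f) ?_ ?_ ?_
  · intro f hf
    simp only [Finset.mem_filter, Finset.mem_univ, true_and]
    exact ⟨f, PT_inj A hf, by simp, (mem_PT A).1 hf⟩
  · intro f hf f' hf' h
    have h1 : ∀ i, ∃ k, f' k = f i := by
      intro i
      have : f i ∈ Finset.univ.image f' := by
        rw [← h]; simp
      simpa using this
    choose s hs using h1
    rw [mem_PT] at hf hf'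
    have h2 : ∀ i j : Fin 4, (j : ℕ) = i + 1 → (s j : ℕ) = s i + 1 := by
      intro i j hij
      rw [← hf', hs, hs, hf, hij]
    have h01 := h2 0 1 rfl
    have h12 := h2 1 2 rfl
    have h23 := h2 2 3 rfl
    have b0 := (s 0).2
    have b3 := (s 3).2
    have e : ∀ i, s i = i := by
      intro i
      apply Fin.ext
      fin_cases i
      · show (s 0 : ℕ) = 0; omega
      · show (s 1 : ℕ) = 1; omega
      · show (s 2 : ℕ) = 2; omega
      · show (s 3 : ℕ) = 3; omega
    funext i
    rw [← hs i, e i]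
  · intro S hS
    simp only [Finset.mem_filter, Finset.mem_univ, true_and] at hS
    obtain ⟨f, _, h2, h3⟩ := hS
    refine ⟨f, (mem_PT A).2 h3, ?_⟩
    ext v
    simp [h2 v]

theorem cl1_eq3 : ∀ x y z : Fin 3, cl1 x y z = 3 ↔ (x : ℕ) = 0 ∧ (y : ℕ) = 0 ∧ (z : ℕ) = 1 := by
  decide +kernel

theorem isP3_iff (x y z : ℕ) : isP3 x y z = true ↔ x = 1 ∧ y = 0 ∧ z = 1 := by
  simp [isP3]

theorem cnt4_eq (hA : IsOriented A) : cnt4 A = (PT A).card := by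
  unfold cnt4 PT
  rw [Finset.card_filter]
  symm
  have h : (∑ f : Fin 4 → V, if ∀ i j : Fin 4, A (f i) (f j) ↔ (j : ℕ) = (i : ℕ) + 1
      then 1 else 0) = ∑ p : V × V × V × V,
      if isP3 (st A p.1 p.2.1) (st A p.1 p.2.2.1) (st A p.2.1 p.2.2.1) = true ∧
        cl1 (st A p.1 p.2.2.2) (st A p.2.1 p.2.2.2) (st A p.2.2.1 p.2.2.2) = 3
      then 1 else 0 := by
    refine Fintype.sum_equiv ⟨fun v => (v 0, v 1, v 2, v 3),
      fun p => ![p.1, p.2.1, p.2.2.1, p.2.2.2], ?_, ?_⟩ _ _ ?_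
    · intro v; ext i; fin_cases i <;> rfl
    · rintro ⟨a, b, c, d⟩; rfl
    · intro f
      have e : (∀ i j : Fin 4, A (f i) (f j) ↔ (j : ℕ) = (i : ℕ) + 1) ↔
          (isP3 (st A (f 0) (f 1)) (st A (f 0) (f 2)) (st A (f 1) (f 2)) = true ∧
          cl1 (st A (f 0) (f 3)) (st A (f 1) (f 3)) (st A (f 2) (f 3)) = 3) := by
        have e3 := cl1_eq3 ⟨_, st_lt (A := A) (f 0) (f 3)⟩ ⟨_, st_lt (A := A) (f 1) (f 3)⟩
          ⟨_, st_lt (A := A) (f 2) (f 3)⟩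
        simp only at e3
        rw [e3, isP3_iff]
        simp only [st_eq_one, st_eq_zero]
        constructor
        · intro h
          refine ⟨⟨(h 0 1).2 rfl, ⟨?_, ?_⟩, (h 1 2).2 rfl⟩, ⟨?_, ?_⟩, ⟨?_, ?_⟩, (h 2 3).2 rfl⟩ <;>
            rw [h] <;> decide
        · rintro ⟨⟨h01, ⟨h02, h20⟩, h12⟩, ⟨h03, h30⟩, ⟨h13, h31⟩, h23⟩
          have h10 := hA _ _ h01
          have h21 := hA _ _ h12
          have h32 := hA _ _ h23
          have hl : ∀ x, ¬ A x x := fun x hx => hA x x hx hx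
          intro i j
          fin_cases i <;> fin_cases j <;> simp [*]
      simp only [e, Equiv.coe_fn_mk]
  rw [h]
  simp only [Fintype.sum_prod_type]

end tuples

/-! ### Blow-ups -/

section blowups

variable {V : Type*} [Fintype V]

/-- The blow-up of the five-cycle defined by a map to `Fin 5`. -/
def BU {V : Type*} (g : V → Fin 5) (u v : V) : Prop := g v = g u + 1

theorem BU_oriented (g : V → Fin 5) : IsOriented (BU g) := by
  intro a b h h'
  unfold BU at h h'
  rw [h] at h'
  have : ∀ x : Fin 5, x ≠ x + 1 + 1 := by decide
  exact this _ h'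

theorem BU_T3Free (g : V → Fin 5) : T3Free (BU g) := by
  rintro a b c ⟨h, h', h''⟩
  unfold BU at h h' h''
  rw [h', h] at h''
  have : ∀ x : Fin 5, x + 1 + 1 ≠ x + 1 := by decide
  exact this _ h''

theorem mem_PT_BU (g : V → Fin 5) (f : Fin 4 → V) :
    f ∈ PT (BU g) ↔ g (f 1) = g (f 0) + 1 ∧ g (f 2) = g (f 0) + 2 ∧ g (f 3) = g (f 0) + 3 := by
  rw [mem_PT]
  unfold BU
  constructor
  · intro h
    have h1 := (h 0 1).2 rfl
    have h2 := (h 1 2).2 rfl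
    have h3 := (h 2 3).2 rfl
    rw [h1] at h2
    rw [h2] at h3
    rw [h1, h2, h3, add_assoc, add_assoc, add_assoc]
    exact ⟨rfl, rfl, rfl⟩
  · rintro ⟨h1, h2, h3⟩ i j
    fin_cases i <;> fin_cases j <;> simp [h1, h2, h3] <;> generalize g (f 0) = x <;>
      revert x <;> decide

/-- The number of induced paths in terms of part sizes. -/
def e4 (x : Fin 5 → ℕ) : ℕ := ∑ i, x i * x (i + 1) * x (i + 2) * x (i + 3)

theorem PT_BU_card (g : V → Fin 5) : (PT (BU g)).card = e4 (partSize g) := by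
  rw [Finset.card_eq_sum_card_fiberwise (f := fun f => g (f 0)) (t := Finset.univ)
    (fun _ _ => Finset.mem_coe.2 (Finset.mem_univ _))]
  unfold e4
  refine Finset.sum_congr rfl fun i _ => ?_
  have e : (PT (BU g)).filter (fun f => g (f 0) = i) = Fintype.piFinset
      (fun k : Fin 4 => Finset.univ.filter fun v => g v = ![i, i + 1, i + 2, i + 3] k) := by
    ext f
    rw [Finset.mem_filter, mem_PT_BU, Fintype.mem_piFinset]
    simp only [Finset.mem_filter, Finset.mem_univ, true_and, Fin.forall_fin_succ]
    simp
    constructor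
    · rintro ⟨⟨h1, h2, h3⟩, h0⟩
      subst h0
      exact ⟨rfl, h1, h2, h3⟩
    · rintro ⟨h0, h1, h2, h3⟩
      subst h0
      exact ⟨⟨h1, h2, h3⟩, rfl⟩
  rw [e, Fintype.card_piFinset, Fin.prod_univ_four]
  rfl

theorem sum_partSize (g : V → Fin 5) : ∑ i, partSize g i = Fintype.card V := by
  unfold partSize
  rw [← Finset.card_univ, Finset.card_eq_sum_card_fiberwise (f := g) (t := Finset.univ)
    (fun _ _ => Finset.mem_coe.2 (Finset.mem_univ _))]

end blowups

/-! ### Balanced part sizes -/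

/-- The number of induced paths in the balanced blow-up. -/
def E4 (n : ℕ) : ℕ :=
  (n % 5) * ((n / 5 + 1) ^ (n % 5 - 1) * (n / 5) ^ (5 - n % 5)) +
    (5 - n % 5) * ((n / 5 + 1) ^ (n % 5) * (n / 5) ^ (4 - n % 5))

theorem e4_expand (x : Fin 5 → ℕ) : e4 x = x 0 * x 1 * x 2 * x 3 + x 1 * x 2 * x 3 * x 4 +
    x 2 * x 3 * x 4 * x 0 + x 3 * x 4 * x 0 * x 1 + x 4 * x 0 * x 1 * x 2 := by
  unfold e4
  rw [Fin.sum_univ_five]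
  rfl

theorem e4_balanced (x : Fin 5 → ℕ) (h : ∀ i j, x i ≤ x j + 1) : e4 x = E4 (∑ i, x i) := by
  obtain ⟨k, hk⟩ : ∃ k, ∀ i, x k ≤ x i := by
    obtain ⟨k, _, hk⟩ := Finset.exists_min_image Finset.univ x ⟨0, Finset.mem_univ _⟩
    exact ⟨k, fun i => hk i (Finset.mem_univ i)⟩
  have hx : ∀ i, x i = x k ∨ x i = x k + 1 := by
    intro i
    have := h i k
    have := hk i
    omega
  generalize hq : x k = q at *
  have fin : ∀ r s : ℕ, r < 5 → s = 5 * q + r → E4 s =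
      r * ((q + 1) ^ (r - 1) * q ^ (5 - r)) + (5 - r) * ((q + 1) ^ r * q ^ (4 - r)) := by
    intro r s hr hs
    have h1 : s % 5 = r := by omega
    have h2 : s / 5 = q := by omega
    unfold E4
    rw [h1, h2]
  have hne : ¬ (x 0 = q + 1 ∧ x 1 = q + 1 ∧ x 2 = q + 1 ∧ x 3 = q + 1 ∧ x 4 = q + 1) := by
    rintro ⟨h0, h1, h2, h3, h4⟩
    fin_cases k <;> simp at hq <;> omega
  rw [e4_expand, Fin.sum_univ_five]
  rcases hx 0 with h0 | h0 <;> rcases hx 1 with h1 | h1 <;> rcases hx 2 with h2 | h2 <;>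
    rcases hx 3 with h3 | h3 <;> rcases hx 4 with h4 | h4 <;> simp only [h0, h1, h2, h3, h4] <;>
    first
    | (exfalso; omega)
    | (rw [fin 0 _ (by norm_num) (by omega)]; norm_num; ring)
    | (rw [fin 1 _ (by norm_num) (by omega)]; norm_num; ring)
    | (rw [fin 2 _ (by norm_num) (by omega)]; norm_num; ring)
    | (rw [fin 3 _ (by norm_num) (by omega)]; norm_num; ring)
    | (rw [fin 4 _ (by norm_num) (by omega)]; norm_num; ring)

theorem E4_lower (n : ℕ) : n ^ 4 ≤ 125 * E4 n + 100 * n ^ 2 := by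
  have h1 : n = 5 * (n / 5) + n % 5 := by omega
  have h2 : n % 5 < 5 := by omega
  unfold E4
  generalize n / 5 = q at *
  generalize n % 5 = r at *
  subst h1
  interval_cases r <;> norm_num <;> ring_nf <;> nlinarith [Nat.zero_le q, Nat.zero_le (q ^ 2)]

theorem exists_balanced (n : ℕ) : ∃ g : Fin n → Fin 5, ∀ i j, partSize g i ≤ partSize g j + 1 := by
  refine ⟨fun v => Fin.ofNat 5 v, ?_⟩
  have h : ∀ i : Fin 5, partSize (fun v : Fin n => Fin.ofNat 5 v) i =
      n / 5 + if (i : ℕ) % 5 < n % 5 then 1 else 0 := by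
    intro i
    rw [← Nat.count_modEq_card n (by norm_num : 0 < 5) i, Nat.count_eq_card_filter_range]
    unfold partSize
    refine Finset.card_bij (fun v _ => (v : ℕ)) ?_ ?_ ?_
    · intro v hv
      simp only [Finset.mem_filter, Finset.mem_univ, true_and, Fin.ext_iff, Fin.val_ofNat] at hv
      simp only [Finset.mem_filter, Finset.mem_range]
      refine ⟨v.2, ?_⟩
      unfold Nat.ModEq
      omega
    · intro v _ w _ h
      exact Fin.ext h
    · intro b hb
      simp only [Finset.mem_filter, Finset.mem_range] at hb
      refine ⟨⟨b, hb.1⟩, ?_, rfl⟩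
      simp only [Finset.mem_filter, Finset.mem_univ, true_and, Fin.ext_iff, Fin.val_ofNat]
      have := hb.2
      unfold Nat.ModEq at this
      omega
  intro i j
  rw [h, h]
  split_ifs <;> omega

/-! ### Approximate structure -/

section structureThm

variable {V : Type*} [Fintype V] (A : V → V → Prop)

theorem exists_path (hA : IsOriented A) (hT : T3Free A)
    (hN : Fintype.card V ^ 4 ≤ 125 * (PT A).card + 100 * Fintype.card V ^ 2)
    (hn : 15 ≤ Fintype.card V) :
    ∃ a b c : V, isP3 (st A a b) (st A a c) (st A b c) = true ∧
      ∑ u, ∑ w, GB A a b c u w ≤ 288000000 := by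
  by_contra hcon
  push Not at hcon
  have h := bad_bound A hA hT
  rw [← cnt4_eq A hA] at hN
  have key : 288000001 * cnt4 A ≤ Fintype.card V * S5 (GB A) := by
    rw [S5_eq]
    unfold cnt4
    rw [Finset.mul_sum, Finset.mul_sum]
    refine Finset.sum_le_sum fun a _ => ?_
    rw [Finset.mul_sum, Finset.mul_sum]
    refine Finset.sum_le_sum fun b _ => ?_
    rw [Finset.mul_sum, Finset.mul_sum]
    refine Finset.sum_le_sum fun c _ => ?_
    by_cases hp : isP3 (st A a b) (st A a c) (st A b c) = true
    · have h1 : (∑ u, if isP3 (st A a b) (st A a c) (st A b c) = true ∧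
          cl1 (st A a u) (st A b u) (st A c u) = 3 then 1 else 0) ≤ Fintype.card V := by
        rw [← Finset.card_filter]
        exact Finset.card_le_univ _
      have h2 : 288000001 ≤ ∑ u, ∑ w, GB A a b c u w := hcon a b c hp
      calc _ ≤ (∑ u, ∑ w, GB A a b c u w) * Fintype.card V := Nat.mul_le_mul h2 h1
        _ = _ := mul_comm _ _
    · have e2 : ∀ u, (if isP3 (st A a b) (st A a c) (st A b c) = true ∧
        cl1 (st A a u) (st A b u) (st A c u) = 3 then 1 else 0) = 0 :=
        fun u => if_neg fun h => hp h.1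
      rw [Finset.sum_congr rfl fun u _ => e2 u, Finset.sum_const_zero, mul_zero]
      exact Nat.zero_le _
  generalize Fintype.card V = n at *
  generalize cnt4 A = N at *
  generalize S5 (GB A) = B at *
  zify at *
  have h3 : (n : ℤ) * B ≤ n * (11520 * n ^ 5 - 1440000 * n * N) := by
    apply mul_le_mul_of_nonneg_left _ (by positivity)
    linarith
  have h4 : (11520 * n ^ 2 : ℤ) * (n ^ 4 - 125 * N) ≤ (11520 * n ^ 2) * (100 * n ^ 2) := by
    apply mul_le_mul_of_nonneg_left _ (by positivity)
    linarith
  have h5 : (n : ℤ) ^ 2 * 225 ≤ n ^ 2 * n ^ 2 :=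
    mul_le_mul_of_nonneg_left (by nlinarith) (by positivity)
  have h6 : (0 : ℤ) < n ^ 2 := by positivity
  have h7 : (288000001 : ℤ) * N ≤ 1152000 * n ^ 4 := by nlinarith
  nlinarith

theorem class_table : ∀ x y z : Fin 3, cl1 x y z < 5 →
    (cl1 x y z = 0 ∧ (y : ℕ) = 2) ∨ (cl1 x y z = 1 ∧ (x : ℕ) = 1) ∨ (cl1 x y z = 2 ∧ (y : ℕ) = 1) ∨
    (cl1 x y z = 3 ∧ (z : ℕ) = 1) ∨ (cl1 x y z = 4 ∧ (x : ℕ) = 2) := by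
  decide +kernel

theorem expSt_BU (g : V → Fin 5) (u v : V) : expSt (g u) (g v) = st (BU g) u v := by
  have h : ∀ i j : Fin 5, expSt i j = if j = i + 1 then 1 else if i = j + 1 then 2 else 0 := by
    decide
  rw [h]
  unfold st BU
  split_ifs <;> rfl

/-- The pair `u, v` is wrong if its status differs from the one in the blow-up. -/
def Wrong {V : Type*} (A : V → V → Prop) (g : V → Fin 5) (u v : V) : Prop :=
  st A u v ≠ st (BU g) u v

theorem exists_classes (hA : IsOriented A) (hT : T3Free A)
    (hN : Fintype.card V ^ 4 ≤ 125 * (PT A).card + 100 * Fintype.card V ^ 2)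
    (hn : 288000000 < Fintype.card V) :
    ∃ g : V → Fin 5, (∀ u v, g u = g v → ¬ A u v) ∧
      (Finset.univ.filter fun p : V × V => Wrong A g p.1 p.2).card ≤ 288000000 := by
  obtain ⟨a, b, c, hp, hb⟩ := exists_path A hA hT hN (by omega)
  have hGB : ∀ u w, GB A a b c u w = if goodC (st A a u) (st A b u) (st A c u)
    (st A a w) (st A b w) (st A c w) (st A u w) = true then 0 else 1 := by
    intro u w
    unfold GB badC
    rw [hp]
    split_ifs with h
    · rw [h]; rfl
    · rw [Bool.eq_false_iff.2 h]; rfl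
  set cls : V → ℕ := fun u => cl1 (st A a u) (st A b u) (st A c u) with hcls
  have hlt : ∀ u, cls u < 5 := by
    intro u
    by_contra hu
    have h1 : ∀ w, GB A a b c u w = 1 := by
      intro w
      rw [hGB, if_neg]
      intro hg
      unfold goodC at hg
      simp only [Bool.and_eq_true, Nat.blt_eq] at hg
      exact hu hg.1
    have h2 : ∑ w, GB A a b c u w ≤ ∑ u, ∑ w, GB A a b c u w :=
      Finset.single_le_sum (f := fun u => ∑ w, GB A a b c u w) (fun _ _ => Nat.zero_le _)
        (Finset.mem_univ u)
    rw [Finset.sum_congr rfl fun w _ => h1 w, Finset.sum_const, Finset.card_univ, smul_eq_mul,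
      mul_one] at h2
    omega
  refine ⟨fun u => ⟨cls u, hlt u⟩, ?_, ?_⟩
  · intro u v huv hAuv
    have huv' : cls u = cls v := by simpa [Fin.ext_iff] using huv
    have tu := class_table ⟨_, st_lt (A := A) a u⟩ ⟨_, st_lt (A := A) b u⟩
      ⟨_, st_lt (A := A) c u⟩ (hlt u)
    have tv := class_table ⟨_, st_lt (A := A) a v⟩ ⟨_, st_lt (A := A) b v⟩
      ⟨_, st_lt (A := A) c v⟩ (hlt v)
    change (cls u = 0 ∧ st A b u = 2) ∨ (cls u = 1 ∧ st A a u = 1) ∨ (cls u = 2 ∧ st A b u = 1) ∨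
      (cls u = 3 ∧ st A c u = 1) ∨ (cls u = 4 ∧ st A a u = 2) at tu
    change (cls v = 0 ∧ st A b v = 2) ∨ (cls v = 1 ∧ st A a v = 1) ∨ (cls v = 2 ∧ st A b v = 1) ∨
      (cls v = 3 ∧ st A c v = 1) ∨ (cls v = 4 ∧ st A a v = 2) at tv
    simp only [st_eq_one, st_eq_two hA] at tu tv
    rcases tu with ⟨e, h⟩ | ⟨e, h⟩ | ⟨e, h⟩ | ⟨e, h⟩ | ⟨e, h⟩ <;>
      rcases tv with ⟨e', h'⟩ | ⟨e', h'⟩ | ⟨e', h'⟩ | ⟨e', h'⟩ | ⟨e', h'⟩ <;>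
      first
      | (exfalso; omega)
      | exact hT _ _ _ ⟨hAuv, h', h⟩
      | exact hT _ _ _ ⟨h, hAuv, h'⟩
  · refine le_trans ?_ hb
    rw [Finset.card_filter, Fintype.sum_prod_type]
    refine Finset.sum_le_sum fun u _ => Finset.sum_le_sum fun w _ => ?_
    rw [hGB]
    split_ifs with h1 h2 h2
    · exfalso
      unfold goodC at h2
      simp only [Bool.and_eq_true, Nat.blt_eq] at h2
      apply h1
      rw [← expSt_BU]
      exact (Nat.eq_of_beq_eq_true h2.2.2).symm
    · exact le_refl _
    · exact le_refl _
    · exact Nat.zero_le _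

end structureThm

/-! ### Comparing with the blow-up -/

/-- The status of positions `i, j` on a path. -/
def pst (i j : ℕ) : ℕ := cond (Nat.beq j (i + 1)) 1 (cond (Nat.beq i (j + 1)) 2 0)

theorem pst_eq : ∀ i j : Fin 4, pst i j =
    if (j : ℕ) = i + 1 then 1 else if (i : ℕ) = j + 1 then 2 else 0 := by
  decide

theorem two_mismatches : ∀ c0 c1 c2 c3 : Fin 5, ∀ i j : Fin 4,
    expSt (![c0, c1, c2, c3] i) (![c0, c1, c2, c3] j) ≠ pst i j →
    ∃ k l : Fin 4, ((k ≠ i ∨ l ≠ j) ∧ (k ≠ j ∨ l ≠ i)) ∧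
      expSt (![c0, c1, c2, c3] k) (![c0, c1, c2, c3] l) ≠ pst k l := by
  decide +kernel

theorem cover_four : ∀ i j k l : Fin 4, i ≠ j → k ≠ l → (k ≠ i ∨ l ≠ j) ∧ (k ≠ j ∨ l ≠ i) →
    ∃ r : Fin 4, ∀ t, t = i ∨ t = j ∨ t = k ∨ t = l ∨ t = r := by
  decide +kernel

section compare

variable {V : Type*} [Fintype V] (A : V → V → Prop)

theorem PT_st {f : Fin 4 → V} (hf : f ∈ PT A) (i j : Fin 4) : st A (f i) (f j) = pst i j := by
  rw [mem_PT] at hf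
  rw [pst_eq]
  unfold st
  simp only [hf]

theorem PT_of_st {f : Fin 4 → V}
    (hf : ∀ i j : Fin 4, st A (f i) (f j) = pst i j) : f ∈ PT A := by
  rw [mem_PT]
  intro i j
  rw [← st_eq_one (A := A), hf, pst_eq]
  split_ifs with h1 h2
  · simp [h1]
  · simp [h1]
  · simp [h1]

theorem wrong_pairs (g : V → Fin 5) {f : Fin 4 → V} (hf : f ∈ PT A) (hf' : f ∉ PT (BU g)) :
    ∃ i j k l r : Fin 4, Wrong A g (f i) (f j) ∧ Wrong A g (f k) (f l) ∧
      ∀ t, t = i ∨ t = j ∨ t = k ∨ t = l ∨ t = r := by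
  have hw : ∀ i j : Fin 4, Wrong A g (f i) (f j) ↔ expSt (![g (f 0), g (f 1), g (f 2), g (f 3)] i)
      (![g (f 0), g (f 1), g (f 2), g (f 3)] j) ≠ pst i j := by
    intro i j
    have e : ∀ i, ![g (f 0), g (f 1), g (f 2), g (f 3)] i = g (f i) := by
      intro i; fin_cases i <;> rfl
    rw [e, e, expSt_BU, ← PT_st A hf]
    exact ne_comm
  have hd : ∀ i j : Fin 4, Wrong A g (f i) (f j) → i ≠ j := by
    intro i j h hij
    subst hij
    apply h
    have h1 := PT_st A hf i i
    rw [h1, ← expSt_BU]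
    have : ∀ i : Fin 4, ∀ x : Fin 5, pst i i = expSt x x := by decide
    exact this _ _
  obtain ⟨i, j, hij⟩ : ∃ i j : Fin 4, Wrong A g (f i) (f j) := by
    by_contra hcon
    push Not at hcon
    apply hf'
    apply PT_of_st
    intro i j
    rw [← PT_st A hf]
    by_contra h
    exact hcon i j (Ne.symm h)
  obtain ⟨k, l, hne, hkl⟩ := two_mismatches _ _ _ _ i j ((hw i j).1 hij)
  rw [← hw] at hkl
  obtain ⟨r, hr⟩ := cover_four i j k l (hd _ _ hij) (hd _ _ hkl) hne
  exact ⟨i, j, k, l, r, hij, hkl, hr⟩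

theorem new_paths_bound (g : V → Fin 5) (K : ℕ)
    (hK : (Finset.univ.filter fun p : V × V => Wrong A g p.1 p.2).card ≤ K) :
    (PT A \ PT (BU g)).card ≤ 1024 * (K * K * Fintype.card V) := by
  set W := Finset.univ.filter fun p : V × V => Wrong A g p.1 p.2 with hW
  set T : Finset (Fin 4 × Fin 4 × Fin 4 × Fin 4 × Fin 4) := Finset.univ.filter
    fun q => ∀ t, t = q.1 ∨ t = q.2.1 ∨ t = q.2.2.1 ∨ t = q.2.2.2.1 ∨ t = q.2.2.2.2 with hT
  have hsub : PT A \ PT (BU g) ⊆ T.biUnion fun q => Finset.univ.filter fun f : Fin 4 → V =>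
      Wrong A g (f q.1) (f q.2.1) ∧ Wrong A g (f q.2.2.1) (f q.2.2.2.1) := by
    intro f hf
    rw [Finset.mem_sdiff] at hf
    obtain ⟨i, j, k, l, r, h1, h2, h3⟩ := wrong_pairs A g hf.1 hf.2
    rw [Finset.mem_biUnion]
    refine ⟨(i, j, k, l, r), ?_, ?_⟩
    · simp only [hT, Finset.mem_filter, Finset.mem_univ, true_and]
      exact h3
    · simp only [Finset.mem_filter, Finset.mem_univ, true_and]
      exact ⟨h1, h2⟩
  have hone : ∀ q ∈ T, (Finset.univ.filter fun f : Fin 4 → V =>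
      Wrong A g (f q.1) (f q.2.1) ∧ Wrong A g (f q.2.2.1) (f q.2.2.2.1)).card
      ≤ K * K * Fintype.card V := by
    rintro ⟨i, j, k, l, r⟩ hq
    simp only [hT, Finset.mem_filter, Finset.mem_univ, true_and] at hq
    have h1 : (Finset.univ.filter fun f : Fin 4 → V =>
      Wrong A g (f i) (f j) ∧ Wrong A g (f k) (f l)).card
      ≤ ((W ×ˢ W) ×ˢ (Finset.univ : Finset V)).card := by
      refine Finset.card_le_card_of_injOn (fun f => (((f i, f j), (f k, f l)), f r)) ?_ ?_
      · intro f hf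
        simp only [Finset.coe_filter, Finset.mem_univ, true_and, Set.mem_ofPred_eq] at hf
        simp only [Finset.mem_coe, Finset.mem_product, hW, Finset.mem_filter, Finset.mem_univ,
          true_and, and_true]
        exact hf
      · intro f _ f' _ h
        simp only [Prod.mk.injEq] at h
        obtain ⟨⟨⟨a1, a2⟩, a3, a4⟩, a5⟩ := h
        funext t
        rcases hq t with rfl | rfl | rfl | rfl | rfl <;> assumption
    refine h1.trans ?_
    rw [Finset.card_product, Finset.card_product, Finset.card_univ]
    gcongr
  have hTc : T.card ≤ 1024 := by
    refine (Finset.card_le_univ T).trans ?_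
    simp
  calc _ ≤ _ := Finset.card_le_card hsub
    _ ≤ T.card * (K * K * Fintype.card V) := Finset.card_biUnion_le_card_mul _ _ _ hone
    _ ≤ _ := Nat.mul_le_mul_right _ hTc

theorem lost_paths_aux (g : V → Fin 5) (m : ℕ) (hm : ∀ i, m ≤ partSize g i) (F : V → V → Fin 4 → V)
    (p q : Fin 5) (hinj : ∀ y z y' z', F y z = F y' z' → y = y' ∧ z = z')
    (hF : ∀ y z, g y = p → g z = q → F y z ∈ PT (BU g) \ PT A) :
    m * m ≤ (PT (BU g) \ PT A).card := by
  have h := Finset.card_le_card_of_injOn (s := (Finset.univ.filter fun v => g v = p) ×ˢ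
    (Finset.univ.filter fun v => g v = q)) (t := PT (BU g) \ PT A) (fun x => F x.1 x.2) ?_ ?_
  · rw [Finset.card_product] at h
    exact (Nat.mul_le_mul (hm p) (hm q)).trans h
  · rintro ⟨y, z⟩ hx
    simp only [Finset.mem_coe, Finset.mem_product, Finset.mem_filter, Finset.mem_univ,
      true_and] at hx
    exact Finset.mem_coe.2 (hF y z hx.1 hx.2)
  · rintro ⟨y, z⟩ _ ⟨y', z'⟩ _ h
    obtain ⟨h1, h2⟩ := hinj _ _ _ _ h
    exact Prod.ext h1 h2

theorem lost_paths (hA : IsOriented A) (g : V → Fin 5) (hs : ∀ u v, g u = g v → ¬ A u v) (m : ℕ)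
    (hm : ∀ i, m ≤ partSize g i) (u v : V) (huv : Wrong A g u v) :
    m * m ≤ (PT (BU g) \ PT A).card := by
  have hboth : ∀ (u v : V), Wrong A g u v → ∀ (f : Fin 4 → V) (i j : Fin 4), f i = u → f j = v →
      f ∈ PT (BU g) → f ∈ PT (BU g) \ PT A := by
    intro u v huv f i j hi hj hf
    rw [Finset.mem_sdiff]
    refine ⟨hf, fun hf' => huv ?_⟩
    rw [← hi, ← hj, PT_st _ hf', PT_st _ hf]
  have c1 : ∀ u v, Wrong A g u v → g v = g u + 1 → m * m ≤ (PT (BU g) \ PT A).card := by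
    intro u v huv h
    refine lost_paths_aux A g m hm (fun y z => ![u, v, y, z]) (g u + 2) (g u + 3) ?_ ?_
    · intro y z y' z' h
      exact ⟨congrFun h 2, congrFun h 3⟩
    · intro y z hy hz
      exact hboth u v huv _ 0 1 rfl rfl ((mem_PT_BU g _).2 ⟨h, hy, hz⟩)
  have c2 : ∀ u v, Wrong A g u v → g v = g u + 2 → m * m ≤ (PT (BU g) \ PT A).card := by
    intro u v huv h
    refine lost_paths_aux A g m hm (fun y z => ![u, y, v, z]) (g u + 1) (g u + 3) ?_ ?_
    · intro y z y' z' h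
      exact ⟨congrFun h 1, congrFun h 3⟩
    · intro y z hy hz
      exact hboth u v huv _ 0 2 rfl rfl ((mem_PT_BU g _).2 ⟨hy, h, hz⟩)
  have hvu : Wrong A g v u := by
    intro h
    apply huv
    rw [← rv_st hA, h, rv_st (BU_oriented g)]
  have hcase : ∀ x y : Fin 5, x = y ∨ y = x + 1 ∨ y = x + 2 ∨ x = y + 1 ∨ x = y + 2 := by decide
  rcases hcase (g u) (g v) with h | h | h | h | h
  · exfalso
    apply huv
    have h1 : st A u v = 0 := (st_eq_zero u v).2 ⟨hs u v h, hs v u h.symm⟩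
    rw [h1, ← expSt_BU, h]
    have : ∀ x : Fin 5, 0 = expSt x x := by decide
    exact this _
  · exact c1 u v huv h
  · exact c2 u v huv h
  · exact c1 v u hvu h
  · exact c2 v u hvu h

end compare

/-! ### Sizes of the parts -/

theorem e4_rot (x : Fin 5 → ℕ) (i : Fin 5) : e4 (fun j => x (i + j)) = e4 x := by
  unfold e4
  refine Fintype.sum_equiv (Equiv.addLeft i) _ _ fun j => ?_
  simp only [Equiv.coe_addLeft, add_assoc]

theorem four_prod (b c d e n : ℕ) (h : b + c + d + e ≤ n) : 256 * (b * c * d * e) ≤ n ^ 4 := by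
  have h1 : 4 * (b * c) ≤ (b + c) ^ 2 := by zify; nlinarith [sq_nonneg ((b : ℤ) - c)]
  have h2 : 4 * (d * e) ≤ (d + e) ^ 2 := by zify; nlinarith [sq_nonneg ((d : ℤ) - e)]
  have h3 : 4 * ((b + c) * (d + e)) ≤ ((b + c) + (d + e)) ^ 2 := by
    zify; nlinarith [sq_nonneg (((b : ℤ) + c) - (d + e))]
  have h4 : (b + c) + (d + e) ≤ n := by omega
  calc 256 * (b * c * d * e) = 16 * ((4 * (b * c)) * (4 * (d * e))) := by ring
    _ ≤ 16 * ((b + c) ^ 2 * (d + e) ^ 2) := by gcongr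
    _ = (4 * ((b + c) * (d + e))) ^ 2 := by ring
    _ ≤ (((b + c) + (d + e)) ^ 2) ^ 2 := by gcongr
    _ ≤ (n ^ 2) ^ 2 := by gcongr
    _ = n ^ 4 := by ring

theorem part_zero_large (x : Fin 5 → ℕ) (n K : ℕ) (hx : ∑ i, x i = n) (hK : 1 ≤ K)
    (hn : 10 ^ 10 * (K * K) ≤ n)
    (h : n ^ 4 ≤ 125 * (e4 x + 1024 * (K * K * n)) + 100 * n ^ 2) : n ≤ 2000 * x 0 := by
  by_contra hcon
  push Not at hcon
  rw [e4_expand] at h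
  rw [Fin.sum_univ_five] at hx
  have p := four_prod (x 1) (x 2) (x 3) (x 4) n (by omega)
  have b1 : x 1 ≤ n := by omega
  have b2 : x 2 ≤ n := by omega
  have b3 : x 3 ≤ n := by omega
  have b4 : x 4 ≤ n := by omega
  generalize x 0 = a at *
  generalize x 1 = b at *
  generalize x 2 = c at *
  generalize x 3 = d at *
  generalize x 4 = e at *
  have q1 : a * b * c * d ≤ a * n * n * n := by gcongr
  have q2 : c * d * e * a ≤ n * n * n * a := by gcongr
  have q3 : d * e * a * b ≤ n * n * a * n := by gcongr
  have q4 : e * a * b * c ≤ n * a * n * n := by gcongr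
  have q5 : 2000 * a * (n * n * n) ≤ n * (n * n * n) := Nat.mul_le_mul_right _ hcon.le
  have q6 : 10 ^ 10 * (K * K) * n ≤ n * n := Nat.mul_le_mul_right _ hn
  have hn1 : 10 ^ 10 ≤ n := le_trans (by nlinarith) hn
  have q7 : 10 ^ 10 * (n * n) ≤ n * (n * n) := Nat.mul_le_mul_right _ hn1
  have q8 : 10 ^ 10 * (n * n * n) ≤ n * (n * n * n) := Nat.mul_le_mul_right _ hn1
  have q9 : 0 < n * n := by positivity
  generalize K * K = k2 at *
  ring_nf at *
  omega

theorem part_large (x : Fin 5 → ℕ) (n K : ℕ) (hx : ∑ i, x i = n) (hK : 1 ≤ K)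
    (hn : 10 ^ 10 * (K * K) ≤ n)
    (h : n ^ 4 ≤ 125 * (e4 x + 1024 * (K * K * n)) + 100 * n ^ 2) (i : Fin 5) :
    n ≤ 2000 * x i := by
  have h1 := part_zero_large (fun j => x (i + j)) n K
    (by rw [← hx]; exact Fintype.sum_equiv (Equiv.addLeft i) _ _ fun j => rfl) hK hn
    (by rw [e4_rot]; exact h)
  simpa using h1

set_option maxHeartbeats 4000000 in
theorem e4_improve (x y : Fin 5 → ℕ) (i j : Fin 5) (hij : i ≠ j) (h1 : x i = y i + 1)
    (h2 : y j = x j + 1) (h3 : ∀ k, k ≠ i → k ≠ j → x k = y k) (hpos : ∀ k, 0 < y k)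
    (hlt : x j + 2 ≤ x i) : e4 x < e4 y := by
  have hd : (0 : ℤ) < (y i : ℤ) - x j := by omega
  have key : ∀ k l, (0 : ℤ) < ((y i : ℤ) - x j) * (y k * y l) := by
    intro k l
    have := hpos k
    have := hpos l
    positivity
  have k01 := key 0 1
  have k02 := key 0 2
  have k03 := key 0 3
  have k04 := key 0 4
  have k12 := key 1 2
  have k13 := key 1 3
  have k14 := key 1 4
  have k23 := key 2 3
  have k24 := key 2 4
  have k34 := key 3 4
  have a0 := h3 0
  have a1 := h3 1
  have a2 := h3 2
  have a3 := h3 3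
  have a4 := h3 4
  clear key h3 hpos hd
  rw [e4_expand, e4_expand]
  zify at *
  fin_cases i <;> fin_cases j <;> simp at * <;> simp only [*] at * <;> linarith

theorem sizes_balanced {V : Type*} [Fintype V] (g : V → Fin 5) (hpos : ∀ i, 2 ≤ partSize g i)
    (hmax : ∀ g' : V → Fin 5, e4 (partSize g') ≤ e4 (partSize g)) (i j : Fin 5) :
    partSize g i ≤ partSize g j + 1 := by
  by_contra hcon
  push Not at hcon
  have hij : i ≠ j := by
    rintro rfl
    omega
  obtain ⟨v, hv⟩ : ∃ v, g v = i := by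
    have h : 0 < partSize g i := lt_of_lt_of_le (by norm_num) (hpos i)
    obtain ⟨v, hv⟩ := Finset.card_pos.1 h
    exact ⟨v, by simpa using hv⟩
  have e1 : partSize g i = partSize (Function.update g v j) i + 1 := by
    unfold partSize
    rw [← Finset.card_erase_add_one (s := Finset.univ.filter fun w => g w = i) (a := v)
      (by simp [hv])]
    congr 2
    ext w
    simp only [Finset.mem_erase, Finset.mem_filter, Finset.mem_univ, true_and]
    by_cases hw : w = v
    · subst hw
      simp [hij.symm]
    · simp [hw]
  have e2 : partSize (Function.update g v j) j = partSize g j + 1 := by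
    unfold partSize
    rw [← Finset.card_erase_add_one (s := Finset.univ.filter fun w => Function.update g v j w = j)
      (a := v) (by simp)]
    congr 2
    ext w
    simp only [Finset.mem_erase, Finset.mem_filter, Finset.mem_univ, true_and]
    by_cases hw : w = v
    · subst hw
      simp [hv, hij]
    · simp [hw]
  have e3 : ∀ k, k ≠ i → k ≠ j → partSize g k = partSize (Function.update g v j) k := by
    intro k hki hkj
    unfold partSize
    congr 1
    ext w
    simp only [Finset.mem_filter, Finset.mem_univ, true_and]
    by_cases hw : w = v
    · subst hw
      simp [hv, hki.symm, hkj.symm]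
    · simp [hw]
  have hp : ∀ k, 0 < partSize (Function.update g v j) k := by
    intro k
    have := hpos k
    by_cases hki : k = i
    · subst hki; omega
    · by_cases hkj : k = j
      · subst hkj; omega
      · rw [← e3 k hki hkj]; omega
  have h := e4_improve _ _ i j hij e1 e2 e3 hp (by omega)
  exact absurd (hmax (Function.update g v j)) (by omega)

/-! ### Conclusion -/

theorem card_swap {V : Type*} [Fintype V] (A B : V → V → Prop) :
    (PT A).card + (PT B \ PT A).card = (PT B).card + (PT A \ PT B).card := by
  have h1 := Finset.card_sdiff_add_card_inter (PT A) (PT B)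
  have h2 := Finset.card_sdiff_add_card_inter (PT B) (PT A)
  rw [Finset.inter_comm] at h2
  omega

theorem forward_dir (n : ℕ) (hn : 10 ^ 10 * (288000000 * 288000000) ≤ n) (A : Fin n → Fin n → Prop)
    (hA : IsOriented A) (hT : T3Free A)
    (hmax : ∀ B : Fin n → Fin n → Prop, IsOriented B → T3Free B → numPaths B 4 ≤ numPaths A 4) :
    IsBalancedBlowupC5 A := by
  have hmax' : ∀ g : Fin n → Fin 5, e4 (partSize g) ≤ (PT A).card := by
    intro g
    rw [← PT_BU_card, ← numPaths_eq, ← numPaths_eq]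
    exact hmax _ (BU_oriented g) (BU_T3Free g)
  have hlow : n ^ 4 ≤ 125 * (PT A).card + 100 * n ^ 2 := by
    obtain ⟨g0, hg0⟩ := exists_balanced n
    have h1 := hmax' g0
    rw [e4_balanced _ hg0, sum_partSize, Fintype.card_fin] at h1
    have h2 := E4_lower n
    omega
  obtain ⟨g, hs, hK⟩ := exists_classes A hA hT (by rw [Fintype.card_fin]; exact hlow)
    (by rw [Fintype.card_fin]; omega)
  have hnew := new_paths_bound A g _ hK
  rw [Fintype.card_fin] at hnew
  have hcard := card_swap A (BU g)
  have hsum : ∑ i, partSize g i = n := by rw [sum_partSize, Fintype.card_fin]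
  have hlarge := part_large (partSize g) n 288000000 hsum (by norm_num) hn (by
    rw [← PT_BU_card]
    omega)
  have hright : ∀ u v, ¬ Wrong A g u v := by
    intro u v huv
    obtain ⟨k, _, hk⟩ := Finset.exists_min_image Finset.univ (partSize g) ⟨0, Finset.mem_univ _⟩
    have h1 := lost_paths A hA g hs (partSize g k) (fun i => hk i (Finset.mem_univ i)) u v huv
    have h2 := hmax' g
    rw [← PT_BU_card] at h2
    have h3 := hlarge k
    generalize partSize g k = m at *
    have h4 : m * m ≤ 1024 * (288000000 * 288000000 * n) := by omega
    have h5 : n * n ≤ (2000 * m) * (2000 * m) := Nat.mul_le_mul h3 h3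
    have h6 : 10 ^ 10 * (288000000 * 288000000) * n ≤ n * n := Nat.mul_le_mul_right _ hn
    have h7 : (2000 * m) * (2000 * m) = 4000000 * (m * m) := by ring
    omega
  have hAB : A = BU g := by
    funext u v
    have h := hright u v
    unfold Wrong at h
    rw [not_not] at h
    apply propext
    rw [← st_eq_one (A := A), h, st_eq_one]
  refine ⟨g, fun u v => by rw [hAB]; rfl, ?_⟩
  have hb := sizes_balanced g (fun i => by have := hlarge i; omega) (fun g' => by
    rw [← PT_BU_card g, ← hAB]
    exact hmax' g')
  intro i j
  have := hb i j
  omega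

theorem numPaths_balanced (n : ℕ) (A : Fin n → Fin n → Prop) (h : IsBalancedBlowupC5 A) :
    numPaths A 4 = E4 n := by
  obtain ⟨g, hg, hb⟩ := h
  have hAB : A = BU g := by
    funext u v
    exact propext (hg u v)
  rw [hAB, numPaths_eq, PT_BU_card, e4_balanced, sum_partSize, Fintype.card_fin]
  intro i j
  have := hb i j
  omega

/-- For all sufficiently large `n`, the balanced blow-up `C⃗₅(n)` is,
up to isomorphism, the unique maximizer of the number of induced copies of `P⃗₄` among
`T⃗₃`-free oriented graphs on `n` vertices: a `T⃗₃`-free oriented graph on `n` vertices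
is a maximizer if and only if it is a balanced blow-up of the directed 5-cycle. -/
theorem unique_maximizer_P4_T3free :
    ∃ n₀ : ℕ, ∀ n : ℕ, n₀ ≤ n →
      ∀ A : Fin n → Fin n → Prop, IsOriented A → T3Free A →
        ((∀ B : Fin n → Fin n → Prop, IsOriented B → T3Free B →
            numPaths B 4 ≤ numPaths A 4) ↔ IsBalancedBlowupC5 A) := by
  refine ⟨10 ^ 10 * (288000000 * 288000000), fun n hn A hA hT => ⟨forward_dir n hn A hA hT, ?_⟩⟩
  intro hbal B hB hBT
  obtain ⟨M, hM, hmax⟩ := Finset.exists_max_image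
    (Finset.univ.filter fun C : Fin n → Fin n → Prop => IsOriented C ∧ T3Free C)
    (fun C => numPaths C 4) ⟨A, by simp [hA, hT]⟩
  simp only [Finset.mem_filter, Finset.mem_univ, true_and] at hM hmax
  have hMb := forward_dir n hn M hM.1 hM.2 fun C hC hCT => hmax C ⟨hC, hCT⟩
  rw [numPaths_balanced n A hbal, ← numPaths_balanced n M hMb]
  exact hmax B ⟨hB, hBT⟩
end

section
/- For every positive integer ℓ, the maximum number of induced copies of P⃗₄ over all T⃗₃-free oriented graphs on n = 5ℓ vertices equals 5ℓ⁴, and this maximum is attained only by the balanced blow-up C⃗₅(n) of the directed 5-cycle (up to isomorphism). -/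
open scoped Classical

/-! ### Finite certificate -/

/-- Relation of an ordered pair: none, forward arc, backward arc. -/
inductive Rl : Type
  | z : Rl
  | p : Rl
  | m : Rl

namespace Rl

/-- The relation of the reversed pair. -/
def neg : Rl → Rl
  | z => z
  | p => m
  | m => p

/-- Coefficient of the density form. -/
def edge : Rl → ℤ
  | z => -2
  | p => 3
  | m => 3

def F1 : Rl → Rl → ℤ
  | m, z => 1
  | z, p => -1
  | _, _ => 0

def F2 : Rl → Rl → ℤ
  | p, z => 2
  | m, z => -1
  | z, p => 1
  | z, m => -2
  | _, _ => 0

def F3 : Rl → Rl → ℤ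
  | p, z => 2
  | m, z => -1
  | z, p => -1
  | z, m => 2
  | z, z => -2
  | m, p => -2
  | _, _ => 0

def F4 : Rl → Rl → ℤ
  | m, z => 1
  | z, p => 1
  | z, z => -2
  | m, p => 2
  | _, _ => 0

def G1 : Rl → Rl → ℤ
  | z, p => 1
  | z, m => 1
  | p, z => -1
  | m, z => -1
  | _, _ => 0

def G2 : Rl → Rl → ℤ
  | z, p => 1
  | z, m => -1
  | p, z => 1
  | p, p => 1
  | m, z => -1
  | m, m => -1
  | _, _ => 0

def G3 : Rl → Rl → ℤ
  | z, z => 2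
  | z, p => -2
  | z, m => -2
  | p, z => -2
  | p, p => -3
  | m, z => -2
  | m, m => -3
  | _, _ => 0

/-- The quadratic part attached to an ordered pair. -/
def quad : Rl → Rl → Rl → Rl → Rl → ℤ
  | p, b, c, d, e => 2965 * (F1 b c * F1 d e) + 235 * (F2 b c * F2 d e)
      + 25 * (F3 b c * F3 d e) + 455 * (F4 b c * F4 d e)
  | z, b, c, d, e => 480 * (G1 b c * G1 d e) + 780 * (G2 b c * G2 d e)
      + 20 * (G3 b c * G3 d e)
  | m, _, _, _, _ => 0

/-- Indicator of the pattern `u → v → x → y` being an induced path. -/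
def ind : Rl → Rl → Rl → Rl → Rl → Rl → ℤ
  | p, z, p, z, z, p => 1
  | _, _, _, _, _, _ => 0

/-- Local contribution of an ordered quadruple. -/
def gTerm (a b c d e f : Rl) : ℤ :=
  128 - 16000 * ind a b c d e f - quad a b c d e - 12 * (edge a * edge f)

/-- Symmetrized contribution. -/
def S6 (a b c d e f : Rl) : ℤ :=
    gTerm a b c d e f +
    gTerm a d e b c (f.neg) +
    gTerm b a (c.neg) d f e +
    gTerm b d f a (c.neg) (e.neg) +
    gTerm d a (e.neg) b (f.neg) c +
    gTerm d b (f.neg) a (e.neg) (c.neg) +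
    gTerm (a.neg) c b e d f +
    gTerm (a.neg) e d c b (f.neg) +
    gTerm c (a.neg) (b.neg) e f d +
    gTerm c e f (a.neg) (b.neg) (d.neg) +
    gTerm e (a.neg) (d.neg) c (f.neg) b +
    gTerm e c (f.neg) (a.neg) (d.neg) (b.neg) +
    gTerm (b.neg) (c.neg) a f d e +
    gTerm (b.neg) f d (c.neg) a (e.neg) +
    gTerm (c.neg) (b.neg) (a.neg) f e d +
    gTerm (c.neg) f e (b.neg) (a.neg) (d.neg) +
    gTerm f (b.neg) (d.neg) (c.neg) (e.neg) a +
    gTerm f (c.neg) (e.neg) (b.neg) (d.neg) (a.neg) +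
    gTerm (d.neg) (e.neg) a (f.neg) b c +
    gTerm (d.neg) (f.neg) b (e.neg) a (c.neg) +
    gTerm (e.neg) (d.neg) (a.neg) (f.neg) c b +
    gTerm (e.neg) (f.neg) c (d.neg) (a.neg) (b.neg) +
    gTerm (f.neg) (d.neg) (b.neg) (e.neg) (c.neg) a +
    gTerm (f.neg) (e.neg) (c.neg) (d.neg) (b.neg) (a.neg)

/-- The triple is not a transitive tournament. -/
def t3ok : Rl → Rl → Rl → Bool
  | p, m, p => true
  | m, p, m => true
  | z, _, _ => true
  | _, z, _ => true
  | _, _, z => true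
  | _, _, _ => false

def valid (a b c d e f : Rl) : Bool :=
  t3ok a b c && (t3ok a d e && (t3ok b d f && t3ok c e f))

/-- The part of a vertex from its relations to a fixed arc `0 → 1`. -/
def part : Rl → Rl → Fin 5
  | p, _ => 1
  | m, _ => 4
  | z, p => 2
  | z, m => 0
  | z, z => 3

def isP : Rl → Bool
  | p => true
  | _ => false

def eqB : Rl → Rl → Bool
  | p, p => true
  | z, z => true
  | m, m => true
  | _, _ => false

/-- Relation in the directed 5-cycle. -/
def c5 (i j : Fin 5) : Rl := if j = i + 1 then p else if i = j + 1 then m else z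

def okType : Rl → Rl → Bool
  | m, p => false
  | _, _ => true

def chk (a b c d e f : Rl) : Bool :=
  !(valid a b c d e f) || (decide (0 ≤ S6 a b c d e f) &&
    (!(isP a) || (!(decide (S6 a b c d e f = 0)) ||
      (okType b c && eqB f (c5 (part b c) (part d e))))))

def all (q : Rl → Bool) : Bool := q z && (q p && q m)

theorem of_all {q : Rl → Bool} (h : all q = true) (a : Rl) : q a = true := by
  simp only [all, Bool.and_eq_true] at h
  cases a
  · exact h.1
  · exact h.2.1
  · exact h.2.2

theorem chk_all : (all fun a => all fun b => all fun c => all fun d => all fun e => all fun f =>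
    chk a b c d e f) = true := by
  decide +kernel

theorem chk_true (a b c d e f : Rl) : chk a b c d e f = true :=
  of_all (of_all (of_all (of_all (of_all (of_all chk_all a) b) c) d) e) f

theorem S6_nonneg {a b c d e f : Rl} (hv : valid a b c d e f = true) : 0 ≤ S6 a b c d e f := by
  have h := chk_true a b c d e f
  simp only [chk, hv, Bool.not_true, Bool.false_or, Bool.and_eq_true, decide_eq_true_eq] at h
  exact h.1

theorem eq_of_eqB {a b : Rl} (h : eqB a b = true) : a = b := by
  cases a <;> cases b <;> first | rfl | exact absurd h (by decide)

theorem S6_zero {b c d e f : Rl} (hv : valid p b c d e f = true) (h0 : S6 p b c d e f = 0) :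
    okType b c = true ∧ f = c5 (part b c) (part d e) := by
  have h := chk_true p b c d e f
  simp only [chk, hv, h0, isP, Bool.not_true, Bool.false_or, Bool.and_eq_true, decide_eq_true_eq,
    decide_true] at h
  exact ⟨h.2.1, eq_of_eqB h.2.2⟩

theorem S6_c5 (i j k l : Fin 5) :
    S6 (c5 i j) (c5 i k) (c5 j k) (c5 i l) (c5 j l) (c5 k l) = 0 := by
  revert i j k l
  decide +kernel

end Rl

/-- The quadruple permutations. -/
def permList : List (Fin 4 → Fin 4) :=
  [![0, 1, 2, 3], ![0, 1, 3, 2], ![0, 2, 1, 3], ![0, 2, 3, 1], ![0, 3, 1, 2], ![0, 3, 2, 1], ![1, 0, 2, 3], ![1, 0, 3, 2], ![1, 2, 0, 3], ![1, 2, 3, 0], ![1, 3, 0, 2], ![1, 3, 2, 0], ![2, 0, 1, 3], ![2, 0, 3, 1], ![2, 1, 0, 3], ![2, 1, 3, 0], ![2, 3, 0, 1], ![2, 3, 1, 0], ![3, 0, 1, 2], ![3, 0, 2, 1], ![3, 1, 0, 2], ![3, 1, 2, 0], ![3, 2, 0, 1], ![3, 2, 1, 0]]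

open Rl

/-- The relation between two vertices of the graph. -/
noncomputable def rl {V : Type*} (A : V → V → Prop) (u v : V) : Rl :=
  if A u v then Rl.p else if A v u then Rl.m else Rl.z

theorem rl_swap {V : Type*} {A : V → V → Prop} (hA : IsOriented A) (u v : V) :
    rl A v u = (rl A u v).neg := by
  unfold rl
  by_cases h1 : A u v
  · have h2 := hA _ _ h1
    simp [h1, h2, Rl.neg]
  · by_cases h2 : A v u <;> simp [h1, h2, Rl.neg]

theorem rl_p {V : Type*} {A : V → V → Prop} (u v : V) : rl A u v = Rl.p ↔ A u v := by
  unfold rl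
  by_cases h1 : A u v
  · simp [h1]
  · by_cases h2 : A v u <;> simp [h1, h2]

theorem rl_m {V : Type*} {A : V → V → Prop} (hA : IsOriented A) (u v : V) :
    rl A u v = Rl.m ↔ A v u := by
  unfold rl
  by_cases h1 : A u v
  · simp [h1, hA _ _ h1]
  · by_cases h2 : A v u <;> simp [h1, h2]

theorem rl_z {V : Type*} {A : V → V → Prop} (u v : V) :
    rl A u v = Rl.z ↔ ¬ A u v ∧ ¬ A v u := by
  unfold rl
  by_cases h1 : A u v
  · simp [h1]
  · by_cases h2 : A v u <;> simp [h1, h2]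

theorem t3ok_rl {V : Type*} {A : V → V → Prop} (hA : IsOriented A) (hT : T3Free A) (u v x : V) :
    t3ok (rl A u v) (rl A u x) (rl A v x) = true := by
  have t1 := hT u v x
  have t2 := hT u x v
  have t3 := hT v u x
  have t4 := hT v x u
  have t5 := hT x u v
  have t6 := hT x v u
  rw [← rl_p (A := A) u v, ← rl_p (A := A) v x, ← rl_p (A := A) u x] at t1
  rw [← rl_p (A := A) u v, ← rl_m hA v x, ← rl_p (A := A) u x] at t2
  rw [← rl_m hA u v, ← rl_p (A := A) v x, ← rl_p (A := A) u x] at t3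
  rw [← rl_p (A := A) v x, ← rl_m hA u x, ← rl_m hA u v] at t4
  rw [← rl_m hA u x, ← rl_p (A := A) u v, ← rl_m hA v x] at t5
  rw [← rl_m hA v x, ← rl_m hA u v, ← rl_m hA u x] at t6
  generalize rl A u v = a at *
  generalize rl A u x = b at *
  generalize rl A v x = c at *
  cases a <;> cases b <;> cases c <;> simp_all [t3ok]

theorem valid_rl {V : Type*} {A : V → V → Prop} (hA : IsOriented A) (hT : T3Free A) (u v x y : V) :
    valid (rl A u v) (rl A u x) (rl A v x) (rl A u y) (rl A v y) (rl A x y) = true := by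
  simp [valid, t3ok_rl hA hT]

/-- Symmetrized contribution of a quadruple of vertices. -/
noncomputable def sTup {V : Type*} (A : V → V → Prop) (u v x y : V) : ℤ :=
  S6 (rl A u v) (rl A u x) (rl A v x) (rl A u y) (rl A v y) (rl A x y)

/-- Contribution of a quadruple of vertices. -/
noncomputable def hTup {V : Type*} (A : V → V → Prop) (u v x y : V) : ℤ :=
  gTerm (rl A u v) (rl A u x) (rl A v x) (rl A u y) (rl A v y) (rl A x y)

theorem permList_bij : ∀ s ∈ permList, Function.Bijective s := by
  decide +kernel

theorem sTup_eq {V : Type*} {A : V → V → Prop} (hA : IsOriented A) (f : Fin 4 → V) :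
    sTup A (f 0) (f 1) (f 2) (f 3) =
      (permList.map fun s => hTup A (f (s 0)) (f (s 1)) (f (s 2)) (f (s 3))).sum := by
  have e1 := rl_swap hA (f 0) (f 1)
  have e2 := rl_swap hA (f 0) (f 2)
  have e3 := rl_swap hA (f 0) (f 3)
  have e4 := rl_swap hA (f 1) (f 2)
  have e5 := rl_swap hA (f 1) (f 3)
  have e6 := rl_swap hA (f 2) (f 3)
  unfold sTup S6 permList hTup
  simp only [List.map_cons, List.map_nil, List.sum_cons, List.sum_nil, Matrix.cons_val]
  rw [e1, e2, e3, e4, e5, e6]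
  ring

theorem sum_perm {V : Type*} [Fintype V] [DecidableEq V] (H : V → V → V → V → ℤ)
    (s : Fin 4 → Fin 4) (hs : Function.Bijective s) :
    ∑ f : Fin 4 → V, H (f (s 0)) (f (s 1)) (f (s 2)) (f (s 3)) =
      ∑ f : Fin 4 → V, H (f 0) (f 1) (f 2) (f 3) := by
  let σ : Equiv.Perm (Fin 4) := Equiv.ofBijective s hs
  exact Equiv.sum_comp (Equiv.arrowCongr σ.symm (Equiv.refl V))
    (fun f : Fin 4 → V => H (f 0) (f 1) (f 2) (f 3))

theorem sum_list {V : Type*} [Fintype V] [DecidableEq V] (H : V → V → V → V → ℤ)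
    (l : List (Fin 4 → Fin 4)) (hl : ∀ s ∈ l, Function.Bijective s) :
    ∑ f : Fin 4 → V, (l.map fun s => H (f (s 0)) (f (s 1)) (f (s 2)) (f (s 3))).sum =
      l.length * ∑ f : Fin 4 → V, H (f 0) (f 1) (f 2) (f 3) := by
  induction l with
  | nil => simp
  | cons s l ih =>
    simp only [List.map_cons, List.sum_cons, Finset.sum_add_distrib, List.length_cons]
    rw [ih (fun t ht => hl t (List.mem_cons_of_mem _ ht)),
      sum_perm H s (hl s List.mem_cons_self)]
    push_cast
    ring

theorem sum_sTup {V : Type*} [Fintype V] [DecidableEq V] {A : V → V → Prop} (hA : IsOriented A) :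
    ∑ f : Fin 4 → V, sTup A (f 0) (f 1) (f 2) (f 3) =
      24 * ∑ f : Fin 4 → V, hTup A (f 0) (f 1) (f 2) (f 3) := by
  simp_rw [sTup_eq hA]
  rw [sum_list (hTup A) permList permList_bij]
  rfl

/-- Quadruples as functions. -/
def tupEquiv (V : Type*) : (Fin 4 → V) ≃ V × V × V × V where
  toFun f := (f 0, f 1, f 2, f 3)
  invFun t := ![t.1, t.2.1, t.2.2.1, t.2.2.2]
  left_inv f := by
    funext i
    fin_cases i <;> rfl
  right_inv t := rfl

theorem sum_tup {V : Type*} [Fintype V] [DecidableEq V] (H : V → V → V → V → ℤ) :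
    ∑ f : Fin 4 → V, H (f 0) (f 1) (f 2) (f 3) = ∑ u, ∑ v, ∑ x, ∑ y, H u v x y := by
  have h := Equiv.sum_comp (tupEquiv V) (fun t : V × V × V × V => H t.1 t.2.1 t.2.2.1 t.2.2.2)
  simp only [Fintype.sum_prod_type] at h
  exact h

/-- The sum of squares attached to an ordered pair, as a function of the seven linear forms. -/
noncomputable def pairQuad {V : Type*} [Fintype V] (A : V → V → Prop) (u v : V) : ℤ :=
  match rl A u v with
  | Rl.p => 2965 * (∑ x, F1 (rl A u x) (rl A v x)) ^ 2 + 235 * (∑ x, F2 (rl A u x) (rl A v x)) ^ 2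
      + 25 * (∑ x, F3 (rl A u x) (rl A v x)) ^ 2 + 455 * (∑ x, F4 (rl A u x) (rl A v x)) ^ 2
  | Rl.z => 480 * (∑ x, G1 (rl A u x) (rl A v x)) ^ 2 + 780 * (∑ x, G2 (rl A u x) (rl A v x)) ^ 2
      + 20 * (∑ x, G3 (rl A u x) (rl A v x)) ^ 2
  | Rl.m => 0

theorem pairQuad_nonneg {V : Type*} [Fintype V] (A : V → V → Prop) (u v : V) :
    0 ≤ pairQuad A u v := by
  unfold pairQuad
  split <;> positivity

theorem sum_quad {V : Type*} [Fintype V] (A : V → V → Prop) (u v : V) :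
    ∑ x, ∑ y, quad (rl A u v) (rl A u x) (rl A v x) (rl A u y) (rl A v y) = pairQuad A u v := by
  unfold pairQuad
  cases rl A u v <;>
    simp only [quad, Finset.sum_add_distrib, ← Finset.mul_sum, sq, Finset.sum_mul_sum,
      Finset.sum_const_zero]

/-- The density form. -/
noncomputable def edgeSum {V : Type*} [Fintype V] (A : V → V → Prop) : ℤ :=
  ∑ u, ∑ v, edge (rl A u v)

theorem sum_hTup {V : Type*} [Fintype V] [DecidableEq V] (A : V → V → Prop) :
    ∑ f : Fin 4 → V, hTup A (f 0) (f 1) (f 2) (f 3) =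
      128 * (Fintype.card V : ℤ) ^ 4
      - 16000 * (∑ f : Fin 4 → V, ind (rl A (f 0) (f 1)) (rl A (f 0) (f 2)) (rl A (f 1) (f 2))
          (rl A (f 0) (f 3)) (rl A (f 1) (f 3)) (rl A (f 2) (f 3)))
      - ∑ u, ∑ v, pairQuad A u v - 12 * edgeSum A ^ 2 := by
  have h1 : ∑ f : Fin 4 → V, quad (rl A (f 0) (f 1)) (rl A (f 0) (f 2)) (rl A (f 1) (f 2))
          (rl A (f 0) (f 3)) (rl A (f 1) (f 3)) = ∑ u, ∑ v, pairQuad A u v := by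
    rw [sum_tup (fun u v x y => quad (rl A u v) (rl A u x) (rl A v x) (rl A u y) (rl A v y))]
    simp_rw [sum_quad]
  have h2 : ∑ f : Fin 4 → V, edge (rl A (f 0) (f 1)) * edge (rl A (f 2) (f 3))
      = edgeSum A ^ 2 := by
    rw [sum_tup (fun u v x y => edge (rl A u v) * edge (rl A x y))]
    unfold edgeSum
    simp_rw [sq, ← Finset.mul_sum, ← Finset.sum_mul]
  unfold hTup gTerm
  simp only [Finset.sum_sub_distrib, ← Finset.mul_sum, h1, h2]
  simp [mul_comm]

theorem ind_eq_one {a b c d e f : Rl} :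
    ind a b c d e f = if a = p ∧ b = z ∧ c = p ∧ d = z ∧ e = z ∧ f = p then 1 else 0 := by
  cases a <;> cases b <;> cases c <;> cases d <;> cases e <;> cases f <;> simp [ind]

theorem pattern_iff {V : Type*} {A : V → V → Prop} (hA : IsOriented A) (f : Fin 4 → V) :
    (rl A (f 0) (f 1) = p ∧ rl A (f 0) (f 2) = z ∧ rl A (f 1) (f 2) = p ∧
      rl A (f 0) (f 3) = z ∧ rl A (f 1) (f 3) = z ∧ rl A (f 2) (f 3) = p) ↔
    ∀ i j : Fin 4, A (f i) (f j) ↔ (j : ℕ) = (i : ℕ) + 1 := by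
  simp only [rl_p, rl_z]
  constructor
  · rintro ⟨h1, ⟨h2, h2'⟩, h3, ⟨h4, h4'⟩, ⟨h5, h5'⟩, h6⟩ i j
    have irr : ∀ a, ¬ A a a := fun a h => hA a a h h
    have h1' := hA _ _ h1
    have h3' := hA _ _ h3
    have h6' := hA _ _ h6
    fin_cases i <;> fin_cases j <;> simp [*]
  · intro h
    simp [h]

theorem pattern_inj {V : Type*} {A : V → V → Prop} {f : Fin 4 → V}
    (h : ∀ i j : Fin 4, A (f i) (f j) ↔ (j : ℕ) = (i : ℕ) + 1) : Function.Injective f := by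
  intro i j hij
  have key : ∀ k : Fin 4, ((k : ℕ) = i + 1 ↔ (k : ℕ) = j + 1) ∧ ((i : ℕ) = k + 1 ↔ (j : ℕ) = k + 1) := by
    intro k
    rw [← h i k, ← h j k, ← h k i, ← h k j, hij]
    exact ⟨Iff.rfl, Iff.rfl⟩
  revert i j
  have : ∀ i j : Fin 4, (∀ k : Fin 4, ((k : ℕ) = i + 1 ↔ (k : ℕ) = j + 1) ∧
    ((i : ℕ) = k + 1 ↔ (j : ℕ) = k + 1)) → i = j := by decide
  exact fun i j _ hk => this i j hk

theorem numPaths_eq_s2 {V : Type*} [Fintype V] [DecidableEq V] {A : V → V → Prop}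
    (hA : IsOriented A) :
    (numPaths A 4 : ℤ) = ∑ f : Fin 4 → V, ind (rl A (f 0) (f 1)) (rl A (f 0) (f 2))
      (rl A (f 1) (f 2)) (rl A (f 0) (f 3)) (rl A (f 1) (f 3)) (rl A (f 2) (f 3)) := by
  simp_rw [ind_eq_one, pattern_iff hA]
  rw [Finset.sum_boole]
  congr 1
  symm
  unfold numPaths
  refine Finset.card_bij (fun f _ => Finset.univ.image f) ?_ ?_ ?_
  · intro f hf
    simp only [Finset.mem_filter, Finset.mem_univ, true_and] at hf ⊢
    exact ⟨f, pattern_inj hf, by simp, hf⟩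
  · intro f hf f' hf' him
    simp only [Finset.mem_filter, Finset.mem_univ, true_and] at hf hf'
    have hex : ∀ i, ∃ j, f' j = f i := by
      intro i
      have : f i ∈ Finset.univ.image f := Finset.mem_image_of_mem _ (Finset.mem_univ _)
      rw [him] at this
      simpa using this
    choose s hs using hex
    have hstep : ∀ i j : Fin 4, ((s j : ℕ) = s i + 1 ↔ (j : ℕ) = i + 1) := by
      intro i j
      rw [← hf i j, ← hf' (s i) (s j), hs, hs]
    have e1 := (hstep 0 1).2 rfl
    have e2 := (hstep 1 2).2 rfl
    have e3 := (hstep 2 3).2 rfl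
    have b3 := (s 3).isLt
    funext i
    rw [← hs i]
    congr 1
    apply Fin.ext
    fin_cases i <;> simp <;> omega
  · intro S hS
    simp only [Finset.mem_filter, Finset.mem_univ, true_and] at hS
    obtain ⟨f, hinj, hmem, hpat⟩ := hS
    refine ⟨f, by simpa using hpat, ?_⟩
    ext v
    simp [hmem v]

theorem main_identity {V : Type*} [Fintype V] [DecidableEq V] {A : V → V → Prop}
    (hA : IsOriented A) :
    24 * (128 * (Fintype.card V : ℤ) ^ 4 - 16000 * (numPaths A 4 : ℤ)) =
      ∑ f : Fin 4 → V, sTup A (f 0) (f 1) (f 2) (f 3)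
      + 24 * (∑ u, ∑ v, pairQuad A u v + 12 * edgeSum A ^ 2) := by
  rw [sum_sTup hA, sum_hTup, ← numPaths_eq_s2 hA]
  ring

theorem sum_comp_parts {V : Type*} [Fintype V] (g : V → Fin 5) (φ : Fin 5 → ℤ) :
    ∑ x, φ (g x) = ∑ i, (partSize g i : ℤ) * φ i := by
  rw [← Finset.sum_fiberwise Finset.univ g (fun x => φ (g x))]
  refine Finset.sum_congr rfl fun i _ => ?_
  rw [Finset.sum_congr rfl (g := fun _ => φ i)
    (fun x hx => by rw [(Finset.mem_filter.1 hx).2])]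
  simp [partSize]

theorem sum_parts {V : Type*} [Fintype V] (g : V → Fin 5) :
    ∑ i, (partSize g i : ℤ) = Fintype.card V := by
  have h := sum_comp_parts g (fun _ => 1)
  simpa using h.symm

theorem rl_blowup {V : Type*} {A : V → V → Prop} {g : V → Fin 5} (hb : IsBlowupC5 A g) (u v : V) :
    rl A u v = c5 (g u) (g v) := by
  simp [rl, c5, hb u v, hb v u]

theorem c5_p (i j : Fin 5) : c5 i j = p ↔ j = i + 1 := by
  unfold c5
  by_cases h : j = i + 1
  · simp [h]
  · by_cases h' : i = j + 1 <;> simp [h, h']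

theorem c5_forms_p (i j : Fin 5) (h : eqB (c5 i j) p = true) :
    (∑ k, F1 (c5 i k) (c5 j k) = 0 ∧ ∑ k, F2 (c5 i k) (c5 j k) = 0) ∧
    (∑ k, F3 (c5 i k) (c5 j k) = 0 ∧ ∑ k, F4 (c5 i k) (c5 j k) = 0) := by
  revert i j
  decide +kernel

theorem c5_forms_z (i j : Fin 5) (h : eqB (c5 i j) z = true) :
    ∑ k, G1 (c5 i k) (c5 j k) = 0 ∧ ∑ k, G2 (c5 i k) (c5 j k) = 0 ∧
    ∑ k, G3 (c5 i k) (c5 j k) = 0 := by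
  revert i j
  decide +kernel

theorem c5_edge (i : Fin 5) : ∑ k, edge (c5 i k) = 0 := by
  revert i
  decide +kernel

theorem sum_equal_parts {V : Type*} [Fintype V] {g : V → Fin 5} {l : ℕ}
    (hl : ∀ i, partSize g i = l) (φ : Fin 5 → ℤ) (h0 : ∑ i, φ i = 0) : ∑ x, φ (g x) = 0 := by
  rw [sum_comp_parts]
  simp [hl, ← Finset.mul_sum, h0]

theorem pairQuad_blowup {V : Type*} [Fintype V] {A : V → V → Prop} {g : V → Fin 5} {l : ℕ}
    (hb : IsBlowupC5 A g) (hl : ∀ i, partSize g i = l) (u v : V) : pairQuad A u v = 0 := by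
  unfold pairQuad
  split
  · rename_i h
    rw [rl_blowup hb] at h
    obtain ⟨⟨h1, h2⟩, h3, h4⟩ := c5_forms_p (g u) (g v) (by rw [h]; rfl)
    simp_rw [rl_blowup hb]
    rw [sum_equal_parts hl (fun k => F1 (c5 (g u) k) (c5 (g v) k)) h1,
      sum_equal_parts hl (fun k => F2 (c5 (g u) k) (c5 (g v) k)) h2,
      sum_equal_parts hl (fun k => F3 (c5 (g u) k) (c5 (g v) k)) h3,
      sum_equal_parts hl (fun k => F4 (c5 (g u) k) (c5 (g v) k)) h4]
    norm_num
  · rename_i h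
    rw [rl_blowup hb] at h
    obtain ⟨h1, h2, h3⟩ := c5_forms_z (g u) (g v) (by rw [h]; rfl)
    simp_rw [rl_blowup hb]
    rw [sum_equal_parts hl (fun k => G1 (c5 (g u) k) (c5 (g v) k)) h1,
      sum_equal_parts hl (fun k => G2 (c5 (g u) k) (c5 (g v) k)) h2,
      sum_equal_parts hl (fun k => G3 (c5 (g u) k) (c5 (g v) k)) h3]
    norm_num
  · rfl

theorem numPaths_blowup {V : Type*} [Fintype V] [DecidableEq V] {A : V → V → Prop}
    (hA : IsOriented A) {g : V → Fin 5} {l : ℕ}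
    (hb : IsBlowupC5 A g) (hl : ∀ i, partSize g i = l) :
    128 * (Fintype.card V : ℤ) ^ 4 = 16000 * (numPaths A 4 : ℤ) := by
  have h := main_identity hA
  have h1 : ∑ f : Fin 4 → V, sTup A (f 0) (f 1) (f 2) (f 3) = 0 := by
    refine Finset.sum_eq_zero fun f _ => ?_
    simp only [sTup, rl_blowup hb]
    exact S6_c5 _ _ _ _
  have h2 : edgeSum A = 0 := by
    unfold edgeSum
    refine Finset.sum_eq_zero fun u _ => ?_
    simp only [rl_blowup hb]
    exact sum_equal_parts hl (fun k => edge (c5 (g u) k)) (c5_edge _)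
  rw [h1, h2] at h
  simp only [pairQuad_blowup hb hl, Finset.sum_const_zero] at h
  linarith

theorem sTup_nonneg {V : Type*} {A : V → V → Prop} (hA : IsOriented A) (hT : T3Free A)
    (u v x y : V) : 0 ≤ sTup A u v x y := S6_nonneg (valid_rl hA hT u v x y)

/-- Indicator of a part. -/
def at5 (i k : Fin 5) : ℤ := if k = i then 1 else 0

theorem forms_part {b c : Rl} (h1 : t3ok p b c = true) (h2 : okType b c = true) :
    F1 b c = at5 4 (part b c) - at5 2 (part b c) ∧
    F2 b c = 2 * at5 1 (part b c) - at5 4 (part b c) + at5 2 (part b c) - 2 * at5 0 (part b c) ∧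
    F3 b c = 2 * at5 1 (part b c) - at5 4 (part b c) - at5 2 (part b c) + 2 * at5 0 (part b c)
      - 2 * at5 3 (part b c) ∧
    F4 b c = at5 4 (part b c) + at5 2 (part b c) - 2 * at5 3 (part b c) := by
  cases b <;> cases c <;> first | exact absurd h1 (by decide) | exact absurd h2 (by decide) | decide

theorem sum_at5 {V : Type*} [Fintype V] (g : V → Fin 5) (i : Fin 5) :
    ∑ x, at5 i (g x) = partSize g i := by
  simp [at5, partSize]

theorem blowup_of_eq {V : Type*} [Fintype V] [DecidableEq V] {A : V → V → Prop}
    (hA : IsOriented A) (hT : T3Free A)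
    (heq : 128 * (Fintype.card V : ℤ) ^ 4 = 16000 * (numPaths A 4 : ℤ))
    (hpos : 0 < numPaths A 4) : IsBalancedBlowupC5 A := by
  have h := main_identity hA
  have hS : 0 ≤ ∑ f : Fin 4 → V, sTup A (f 0) (f 1) (f 2) (f 3) :=
    Finset.sum_nonneg fun f _ => sTup_nonneg hA hT _ _ _ _
  have hQ : 0 ≤ ∑ u, ∑ v, pairQuad A u v :=
    Finset.sum_nonneg fun u _ => Finset.sum_nonneg fun v _ => pairQuad_nonneg A u v
  have hE := sq_nonneg (edgeSum A)
  have hS0 : ∑ f : Fin 4 → V, sTup A (f 0) (f 1) (f 2) (f 3) = 0 := by linarith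
  have hQ0 : ∑ u, ∑ v, pairQuad A u v = 0 := by linarith
  have hS' : ∀ u v x y, sTup A u v x y = 0 := by
    intro u v x y
    exact (Finset.sum_eq_zero_iff_of_nonneg (fun f _ => sTup_nonneg hA hT _ _ _ _)).1 hS0
      ![u, v, x, y] (Finset.mem_univ _)
  have hQ' : ∀ u v, pairQuad A u v = 0 := by
    intro u v
    have h1 := (Finset.sum_eq_zero_iff_of_nonneg
      (fun u _ => Finset.sum_nonneg fun v _ => pairQuad_nonneg A u v)).1 hQ0 u (Finset.mem_univ _)
    exact (Finset.sum_eq_zero_iff_of_nonneg (fun v _ => pairQuad_nonneg A u v)).1 h1 v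
      (Finset.mem_univ _)
  obtain ⟨S, hSm⟩ := Finset.card_pos.1 hpos
  obtain ⟨f, -, -, hf⟩ := (Finset.mem_filter.1 hSm).2
  have huv : A (f 0) (f 1) := (hf 0 1).2 rfl
  generalize f 0 = u at huv
  generalize f 1 = v at huv
  have hp : rl A u v = p := (rl_p u v).2 huv
  have hz : ∀ x y, okType (rl A u x) (rl A v x) = true ∧
      rl A x y = c5 (part (rl A u x) (rl A v x)) (part (rl A u y) (rl A v y)) := by
    intro x y
    have hv := valid_rl hA hT u v x y
    have h0 := hS' u v x y
    unfold sTup at h0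
    rw [hp] at hv h0
    exact S6_zero hv h0
  refine ⟨fun x => part (rl A u x) (rl A v x), ?_, ?_⟩
  · intro x y
    rw [← rl_p (A := A) x y, (hz x y).2, c5_p]
  · have hforms := fun x => forms_part (by rw [← hp]; exact t3ok_rl hA hT u v x) (hz x x).1
    have hq := hQ' u v
    unfold pairQuad at hq
    rw [hp] at hq
    simp only at hq
    set g : V → Fin 5 := fun x => part (rl A u x) (rl A v x) with hg
    have s1 := sq_nonneg (∑ x, F1 (rl A u x) (rl A v x))
    have s2 := sq_nonneg (∑ x, F2 (rl A u x) (rl A v x))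
    have s3 := sq_nonneg (∑ x, F3 (rl A u x) (rl A v x))
    have s4 := sq_nonneg (∑ x, F4 (rl A u x) (rl A v x))
    have z1 : ∑ x, F1 (rl A u x) (rl A v x) = 0 := by
      apply pow_eq_zero_iff (two_ne_zero) |>.1; linarith
    have z2 : ∑ x, F2 (rl A u x) (rl A v x) = 0 := by
      apply pow_eq_zero_iff (two_ne_zero) |>.1; linarith
    have z3 : ∑ x, F3 (rl A u x) (rl A v x) = 0 := by
      apply pow_eq_zero_iff (two_ne_zero) |>.1; linarith
    have z4 : ∑ x, F4 (rl A u x) (rl A v x) = 0 := by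
      apply pow_eq_zero_iff (two_ne_zero) |>.1; linarith
    have e : ∀ i, ∑ x, at5 i (part (rl A u x) (rl A v x)) = partSize g i := sum_at5 g
    simp only [fun x => (hforms x).1, Finset.sum_sub_distrib, e] at z1
    simp only [fun x => (hforms x).2.1, Finset.sum_sub_distrib, Finset.sum_add_distrib,
      ← Finset.mul_sum, e] at z2
    simp only [fun x => (hforms x).2.2.1, Finset.sum_sub_distrib, Finset.sum_add_distrib,
      ← Finset.mul_sum, e] at z3
    simp only [fun x => (hforms x).2.2.2, Finset.sum_sub_distrib, Finset.sum_add_distrib,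
      ← Finset.mul_sum, e] at z4
    have all5 : ∀ i, (partSize g i : ℤ) = partSize g 0 := by
      intro i
      fin_cases i <;> simp <;> omega
    intro i j
    rw [all5 i, all5 j]
    simp

/-- For every positive integer `ℓ` and `n = 5ℓ`, every `T⃗₃`-free
oriented graph on `n` vertices has at most `5ℓ⁴` induced copies of `P⃗₄`, with equality
exactly for the balanced blow-up `C⃗₅(n)` of the directed 5-cycle (up to isomorphism). -/
theorem max_P4_T3free_five_ell (ℓ : ℕ) (hℓ : 0 < ℓ)
    (A : Fin (5 * ℓ) → Fin (5 * ℓ) → Prop) (hA : IsOriented A) (hT : T3Free A) :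
    numPaths A 4 ≤ 5 * ℓ ^ 4 ∧ (numPaths A 4 = 5 * ℓ ^ 4 ↔ IsBalancedBlowupC5 A) := by
  have hcard : (Fintype.card (Fin (5 * ℓ)) : ℤ) = 5 * ℓ := by simp
  have key : numPaths A 4 ≤ 5 * ℓ ^ 4 := by
    have h := main_identity hA
    have hS : 0 ≤ ∑ f : Fin 4 → Fin (5 * ℓ), sTup A (f 0) (f 1) (f 2) (f 3) :=
      Finset.sum_nonneg fun f _ => sTup_nonneg hA hT _ _ _ _
    have hQ : 0 ≤ ∑ u, ∑ v, pairQuad A u v :=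
      Finset.sum_nonneg fun u _ => Finset.sum_nonneg fun v _ => pairQuad_nonneg A u v
    have hE := sq_nonneg (edgeSum A)
    rw [hcard] at h
    have : (numPaths A 4 : ℤ) ≤ 5 * (ℓ : ℤ) ^ 4 := by nlinarith
    exact_mod_cast this
  refine ⟨key, ?_, ?_⟩
  · intro h
    refine blowup_of_eq hA hT ?_ ?_
    · rw [hcard, h]
      push_cast
      ring
    · rw [h]
      positivity
  · rintro ⟨g, hb, hbal⟩
    have hl : ∀ i, partSize g i = ℓ := by
      have hs := sum_parts g
      rw [hcard, Fin.sum_univ_five] at hs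
      have h' : ∀ i j : Fin 5, (partSize g i : ℤ) ≤ partSize g j + 1 := fun i j => by
        linarith [hbal i j]
      intro i
      have a0 := h' i 0
      have a1 := h' i 1
      have a2 := h' i 2
      have a3 := h' i 3
      have a4 := h' i 4
      have b0 := h' 0 i
      have b1 := h' 1 i
      have b2 := h' 2 i
      have b3 := h' 3 i
      have b4 := h' 4 i
      fin_cases i <;> simp at * <;> omega
    have h := numPaths_blowup hA hb hl
    rw [hcard] at h
    have : (numPaths A 4 : ℤ) = 5 * (ℓ : ℤ) ^ 4 := by nlinarith
    exact_mod_cast this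
end

section
/- For every ε > 0 there exist n₀ and ε' > 0 such that every T⃗₃-free oriented graph G of order n ≥ n₀ with induced-P⃗₄ density d_{P⃗₄}(G) ≥ 24/125 − ε' can be transformed into a graph isomorphic to C⃗₅(n), the balanced blow-up of the directed 5-cycle on n vertices, by adding, removing, and/or reorienting the arcs of at most ε n² pairs of vertices. -/
open scoped Classical

namespace P4Stab

/-- Code of the relation of a vertex `x` to an (ordered) pair `u, v`. -/
def pos (xu ux xv vx : Bool) : ℕ :=
  bif xu then (bif xv then 3 else bif vx then 5 else 2)
  else bif ux then (bif xv then 7 else bif vx then 8 else 6)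
  else (bif xv then 1 else bif vx then 4 else 0)

def lf1 : ℕ → ℤ
  | 0 => 2 | 1 => -2 | 2 => -2 | 3 => -3 | 4 => -2 | 6 => -2 | 8 => -3 | _ => 0
def lf3 : ℕ → ℤ
  | 1 => 1 | 2 => 1 | 4 => -1 | 6 => -1 | _ => 0
def lf4 : ℕ → ℤ
  | 3 => 1 | 8 => -1 | _ => 0
def lf5 : ℕ → ℤ
  | 1 => 1 | 4 => 1 | 2 => -1 | 6 => -1 | _ => 0
def lf6 : ℕ → ℤ
  | 5 => 2 | 7 => -2 | 1 => -1 | 6 => -1 | 2 => 1 | 4 => 1 | _ => 0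
def lg1 : ℕ → ℤ
  | 0 => 2 | 2 => -1 | 4 => -1 | _ => 0
def lg2 : ℕ → ℤ
  | 0 => 2 | 1 => -1 | 6 => -1 | _ => 0
def lg4 : ℕ → ℤ
  | 2 => 1 | 4 => -1 | _ => 0
def lg5 : ℕ → ℤ
  | 1 => 1 | 6 => -1 | _ => 0

/-- The class (part of the 5-cycle) belonging to a code; `5` means no class. -/
def kls : ℕ → ℕ
  | 1 => 0 | 6 => 1 | 4 => 2 | 0 => 3 | 2 => 4 | _ => 5

/-- The pair `x, y` of codes `cx, cy` is consistent with the blow-up structure. -/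
def okPair (cx cy : ℕ) (xy : Bool) : Bool :=
  (kls cx).blt 5 && (kls cy).blt 5 && (xy == ((kls cx + 1) % 5).beq (kls cy))

/-- The quadratic part, for codes `cx`, `cy`. -/
def quad (uv vu : Bool) (cx cy : ℕ) : ℤ :=
  bif uv then 8 * (lg1 cx * lg1 cy) + 28 * (lg2 cx * lg2 cy) + 112 * (lg4 cx * lg4 cy)
    + 28 * (lg5 cx * lg5 cy)
  else bif vu then 0
  else 2 * (lf1 cx * lf1 cy) + 58 * (lf3 cx * lf3 cy) + 6 * (lf4 cx * lf4 cy)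
    + 57 * (lf5 cx * lf5 cy) + 9 * (lf6 cx * lf6 cy)

/-- Indicator of the pattern of an induced path `u → v → x → y`. -/
def pathInd (a : Fin 4 → Fin 4 → Bool) (u v x y : Fin 4) : Bool :=
  a u v && a v x && a x y && !a v u && !a x v && !a y x &&
    !a u x && !a x u && !a u y && !a y u && !a v y && !a y v

def code (a : Fin 4 → Fin 4 → Bool) (u v x : Fin 4) : ℕ :=
  pos (a x u) (a u x) (a x v) (a v x)

def badInd (a : Fin 4 → Fin 4 → Bool) (u v x y : Fin 4) : Bool :=
  a u v && !okPair (code a u v x) (code a u v y) (a x y)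

def phi (a : Fin 4 → Fin 4 → Bool) (u v x y : Fin 4) : ℤ :=
  8 - (bif pathInd a u v x y then 1000 else 0)
    - quad (a u v) (a v u) (code a u v x) (code a u v y)
    - (bif badInd a u v x y then 1 else 0)

def perms : List (Fin 4 → Fin 4) :=
  [![0,1,2,3], ![0,1,3,2], ![0,2,1,3], ![0,2,3,1], ![0,3,1,2], ![0,3,2,1],
   ![1,0,2,3], ![1,0,3,2], ![1,2,0,3], ![1,2,3,0], ![1,3,0,2], ![1,3,2,0],
   ![2,0,1,3], ![2,0,3,1], ![2,1,0,3], ![2,1,3,0], ![2,3,0,1], ![2,3,1,0],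
   ![3,0,1,2], ![3,0,2,1], ![3,1,0,2], ![3,1,2,0], ![3,2,0,1], ![3,2,1,0]]

theorem perms_bij : ∀ t ∈ perms, Function.Bijective t := by
  decide +kernel

def mk (b01 b10 b02 b20 b12 b21 b03 b30 b13 b31 b23 b32 : Bool) : Fin 4 → Fin 4 → Bool :=
  ![![false, b01, b02, b03], ![b10, false, b12, b13], ![b20, b21, false, b23],
    ![b30, b31, b32, false]]

/-- no transitive triangle, no 2-cycle on three vertices -/
def tri (ab ba ac ca bc cb : Bool) : Bool :=
  !(ab && bc && ac) && !(ac && cb && ab) && !(ba && ac && bc) && !(bc && ca && ba) &&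
    !(ca && ab && cb) && !(cb && ba && ca) && !(ab && ba) && !(ac && ca) && !(bc && cb)

/-- `pos`, in continuation passing style (this makes the kernel computation faster). -/
def posK (xu ux xv vx : Bool) (k : ℕ → ℤ) : ℤ :=
  bif xu then (bif xv then k 3 else bif vx then k 5 else k 2)
  else bif ux then (bif xv then k 7 else bif vx then k 8 else k 6)
  else (bif xv then k 1 else bif vx then k 4 else k 0)

theorem posK_eq (xu ux xv vx : Bool) (k : ℕ → ℤ) : posK xu ux xv vx k = k (pos xu ux xv vx) := by
  cases xu <;> cases ux <;> cases xv <;> cases vx <;> rfl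

def phiC (uv vu xy p : Bool) (cx cy : ℕ) : ℤ :=
  8 - (bif p then 1000 else 0) - quad uv vu cx cy
    - (bif uv && !okPair cx cy xy then 1 else 0)

/-- `phi` as a function of the twelve Boolean entries of the pattern. -/
def phiB (uv vu ux xu vx xv uy yu vy yv xy yx : Bool) : ℤ :=
  posK xu ux xv vx fun cx => posK yu uy yv vy fun cy =>
    bif uv && vx && xy && !vu && !xv && !yx && !ux && !xu && !uy && !yu && !vy && !yv
    then bif xy then phiC uv vu true true cx cy else phiC uv vu false true cx cy
    else bif xy then phiC uv vu true false cx cy else phiC uv vu false false cx cy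

theorem phi_eq_phiB (a : Fin 4 → Fin 4 → Bool) (u v x y : Fin 4) :
    phi a u v x y = phiB (a u v) (a v u) (a u x) (a x u) (a v x) (a x v) (a u y) (a y u)
      (a v y) (a y v) (a x y) (a y x) := by
  unfold phiB
  rw [posK_eq, posK_eq]
  unfold phi badInd code pathInd phiC
  cases a x y <;> cases (a u v && a v x && _ && _ && _ && _ && _ && _ && _ && _ && _ && _) <;> rfl

/-- The symmetrised sum of `phi`. -/
def tot (b01 b10 b02 b20 b12 b21 b03 b30 b13 b31 b23 b32 : Bool) : ℤ :=
  phiB b01 b10 b02 b20 b12 b21 b03 b30 b13 b31 b23 b32 +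
  (phiB b01 b10 b03 b30 b13 b31 b02 b20 b12 b21 b32 b23 +
  (phiB b02 b20 b01 b10 b21 b12 b03 b30 b23 b32 b13 b31 +
  (phiB b02 b20 b03 b30 b23 b32 b01 b10 b21 b12 b31 b13 +
  (phiB b03 b30 b01 b10 b31 b13 b02 b20 b32 b23 b12 b21 +
  (phiB b03 b30 b02 b20 b32 b23 b01 b10 b31 b13 b21 b12 +
  (phiB b10 b01 b12 b21 b02 b20 b13 b31 b03 b30 b23 b32 +
  (phiB b10 b01 b13 b31 b03 b30 b12 b21 b02 b20 b32 b23 +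
  (phiB b12 b21 b10 b01 b20 b02 b13 b31 b23 b32 b03 b30 +
  (phiB b12 b21 b13 b31 b23 b32 b10 b01 b20 b02 b30 b03 +
  (phiB b13 b31 b10 b01 b30 b03 b12 b21 b32 b23 b02 b20 +
  (phiB b13 b31 b12 b21 b32 b23 b10 b01 b30 b03 b20 b02 +
  (phiB b20 b02 b21 b12 b01 b10 b23 b32 b03 b30 b13 b31 +
  (phiB b20 b02 b23 b32 b03 b30 b21 b12 b01 b10 b31 b13 +
  (phiB b21 b12 b20 b02 b10 b01 b23 b32 b13 b31 b03 b30 +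
  (phiB b21 b12 b23 b32 b13 b31 b20 b02 b10 b01 b30 b03 +
  (phiB b23 b32 b20 b02 b30 b03 b21 b12 b31 b13 b01 b10 +
  (phiB b23 b32 b21 b12 b31 b13 b20 b02 b30 b03 b10 b01 +
  (phiB b30 b03 b31 b13 b01 b10 b32 b23 b02 b20 b12 b21 +
  (phiB b30 b03 b32 b23 b02 b20 b31 b13 b01 b10 b21 b12 +
  (phiB b31 b13 b30 b03 b10 b01 b32 b23 b12 b21 b02 b20 +
  (phiB b31 b13 b32 b23 b12 b21 b30 b03 b10 b01 b20 b02 +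
  (phiB b32 b23 b30 b03 b20 b02 b31 b13 b21 b12 b01 b10 +
  (phiB b32 b23 b31 b13 b21 b12 b30 b03 b20 b02 b10 b01 + 0)))))))))))))))))))))))

def allB (f : Bool → Bool) : Bool := f true && f false

theorem allB_iff (f : Bool → Bool) (h : allB f = true) (b : Bool) : f b = true := by
  unfold allB at h
  cases b <;> simp_all

/-- The finite check, as one Boolean computation. -/
def check : Bool :=
  allB fun b01 => allB fun b10 => allB fun b02 => allB fun b20 => allB fun b12 => allB fun b21 =>
    bif tri b01 b10 b02 b20 b12 b21 then
      allB fun b03 => allB fun b30 => allB fun b13 => allB fun b31 =>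
        bif tri b01 b10 b03 b30 b13 b31 then
          allB fun b23 => allB fun b32 =>
            bif tri b02 b20 b03 b30 b23 b32 then
              bif tri b12 b21 b13 b31 b23 b32 then
                decide (0 ≤ tot b01 b10 b02 b20 b12 b21 b03 b30 b13 b31 b23 b32)
              else true
            else true
        else true
    else true

theorem check_true : check = true := by
  decide +kernel

theorem cert : ∀ b01 b10 b02 b20 b12 b21 : Bool, tri b01 b10 b02 b20 b12 b21 = true →
    ∀ b03 b30 b13 b31 : Bool, tri b01 b10 b03 b30 b13 b31 = true →
    ∀ b23 b32 : Bool, tri b02 b20 b03 b30 b23 b32 = true →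
      tri b12 b21 b13 b31 b23 b32 = true →
      0 ≤ (perms.map fun t => phi (mk b01 b10 b02 b20 b12 b21 b03 b30 b13 b31 b23 b32)
        (t 0) (t 1) (t 2) (t 3)).sum := by
  intro b01 b10 b02 b20 b12 b21 h1 b03 b30 b13 b31 h2 b23 b32 h3 h4
  have h := check_true
  unfold check at h
  have h := allB_iff _ (allB_iff _ (allB_iff _ (allB_iff _ (allB_iff _ (allB_iff _ h b01) b10)
    b02) b20) b12) b21
  rw [h1, cond_true] at h
  have h := allB_iff _ (allB_iff _ (allB_iff _ (allB_iff _ h b03) b30) b13) b31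
  rw [h2, cond_true] at h
  have h := allB_iff _ (allB_iff _ h b23) b32
  rw [h3, h4, cond_true, cond_true] at h
  have h := of_decide_eq_true h
  simp only [phi_eq_phiB]
  exact h

end P4Stab

namespace P4Stab

section
variable {V : Type*} [Fintype V] [DecidableEq V]

/-- Boolean version of the arc relation on a 4-tuple -/
noncomputable def pat (A : V → V → Prop) (x : Fin 4 → V) : Fin 4 → Fin 4 → Bool :=
  fun i j => decide (A (x i) (x j))

theorem tri_of (A : V → V → Prop) (hO : IsOriented A) (hT : T3Free A) (a b c : V) :
    tri (decide (A a b)) (decide (A b a)) (decide (A a c)) (decide (A c a))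
      (decide (A b c)) (decide (A c b)) = true := by
  have h1 := hT a b c
  have h2 := hT a c b
  have h3 := hT b a c
  have h4 := hT b c a
  have h5 := hT c a b
  have h6 := hT c b a
  have h7 := hO a b
  have h8 := hO a c
  have h9 := hO b c
  by_cases p1 : A a b <;> by_cases p2 : A b a <;> by_cases p3 : A a c <;> by_cases p4 : A c a <;>
    by_cases p5 : A b c <;> by_cases p6 : A c b <;> simp_all [tri]

theorem pat_eq (A : V → V → Prop) (hO : IsOriented A) (x : Fin 4 → V) :
    pat A x = mk (pat A x 0 1) (pat A x 1 0) (pat A x 0 2) (pat A x 2 0) (pat A x 1 2)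
      (pat A x 2 1) (pat A x 0 3) (pat A x 3 0) (pat A x 1 3) (pat A x 3 1) (pat A x 2 3)
      (pat A x 3 2) := by
  have hd : ∀ i, pat A x i i = false := fun i => by
    simp only [pat, decide_eq_false_iff_not]
    exact fun h => hO _ _ h h
  funext i j
  fin_cases i <;> fin_cases j <;> first | exact hd _ | rfl

theorem point_nonneg (A : V → V → Prop) (hO : IsOriented A) (hT : T3Free A) (x : Fin 4 → V) :
    0 ≤ (perms.map fun t => phi (pat A x) (t 0) (t 1) (t 2) (t 3)).sum := by
  rw [pat_eq A hO x]
  exact cert _ _ _ _ _ _ (tri_of A hO hT _ _ _) _ _ _ _ (tri_of A hO hT _ _ _) _ _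
    (tri_of A hO hT _ _ _) (tri_of A hO hT _ _ _)

theorem sum_nonneg' (A : V → V → Prop) (hO : IsOriented A) (hT : T3Free A) :
    0 ≤ ∑ x : Fin 4 → V, phi (pat A x) 0 1 2 3 := by
  have key : ∀ t ∈ perms, ∑ x : Fin 4 → V, phi (pat A x) (t 0) (t 1) (t 2) (t 3)
      = ∑ x : Fin 4 → V, phi (pat A x) 0 1 2 3 := by
    intro t ht
    let e : Fin 4 ≃ Fin 4 := Equiv.ofBijective t (perms_bij t ht)
    exact Fintype.sum_equiv (Equiv.arrowCongr e.symm (Equiv.refl V)) _ _ (fun x => rfl)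
  have h1 : 0 ≤ ∑ x : Fin 4 → V, (perms.map fun t => phi (pat A x) (t 0) (t 1) (t 2) (t 3)).sum :=
    Finset.sum_nonneg fun x _ => point_nonneg A hO hT x
  have h2 : ∑ x : Fin 4 → V, (perms.map fun t => phi (pat A x) (t 0) (t 1) (t 2) (t 3)).sum
      = (perms.map fun t => ∑ x : Fin 4 → V, phi (pat A x) (t 0) (t 1) (t 2) (t 3)).sum := by
    induction perms with
    | nil => simp
    | cons a l ih => simp [Finset.sum_add_distrib, ih]
  rw [h2, List.map_congr_left key] at h1
  simp only [List.map_const', List.sum_replicate, nsmul_eq_mul] at h1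
  have : (perms.length : ℤ) = 24 := rfl
  rw [this] at h1
  linarith

/-- 4-tuples as functions -/
def tup : (Fin 4 → V) ≃ V × V × V × V where
  toFun f := (f 0, f 1, f 2, f 3)
  invFun p := ![p.1, p.2.1, p.2.2.1, p.2.2.2]
  left_inv f := by funext i; fin_cases i <;> rfl
  right_inv p := rfl

/-- code of a vertex with respect to a pair -/
noncomputable def cd (A : V → V → Prop) (u v x : V) : ℕ :=
  pos (decide (A x u)) (decide (A u x)) (decide (A x v)) (decide (A v x))

noncomputable def bad (A : V → V → Prop) (u v x y : V) : Bool :=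
  !okPair (cd A u v x) (cd A u v y) (decide (A x y))

noncomputable def isP (A : V → V → Prop) (x : Fin 4 → V) : Bool := pathInd (pat A x) 0 1 2 3

theorem phi_le (A : V → V → Prop) (u v x y : V) :
    phi (pat A ![u, v, x, y]) 0 1 2 3 = 8 - (bif isP A ![u, v, x, y] then 1000 else 0)
      - quad (decide (A u v)) (decide (A v u)) (cd A u v x) (cd A u v y)
      - (bif decide (A u v) && bad A u v x y then 1 else 0) := rfl

theorem sum_mul_self (F : V → ℤ) (c : ℤ) : ∑ x, ∑ y, c * (F x * F y) = c * (∑ x, F x) ^ 2 := by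
  rw [pow_two, Finset.sum_mul_sum, Finset.mul_sum]
  simp only [Finset.mul_sum]

/-- the defect of an arc -/
noncomputable def defect (A : V → V → Prop) (u v : V) : ℤ :=
  8 * (∑ x, lg1 (cd A u v x)) ^ 2 + 28 * (∑ x, lg2 (cd A u v x)) ^ 2
    + 112 * (∑ x, lg4 (cd A u v x)) ^ 2 + 28 * (∑ x, lg5 (cd A u v x)) ^ 2
    + ∑ x, ∑ y, (bif bad A u v x y then 1 else 0)

theorem defect_le (A : V → V → Prop) (u v : V) :
    (if A u v then defect A u v else 0) ≤
      ∑ x, ∑ y, (quad (decide (A u v)) (decide (A v u)) (cd A u v x) (cd A u v y)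
      + (bif decide (A u v) && bad A u v x y then 1 else 0)) := by
  by_cases h : A u v
  · simp only [h, if_true, decide_true, Bool.true_and, quad, cond_true, Finset.sum_add_distrib,
      sum_mul_self]
    rfl
  · by_cases h' : A v u
    · simp [h, h', quad]
    · simp only [h, h', if_false, decide_false, Bool.false_and, quad, cond_false,
        Finset.sum_add_distrib, sum_mul_self]
      simp only [Finset.sum_const_zero]
      positivity

theorem main_ineq (A : V → V → Prop) (hO : IsOriented A) (hT : T3Free A) :
    (∑ u, ∑ v, (if A u v then defect A u v else 0)) +
      1000 * ∑ x : Fin 4 → V, (bif isP A x then 1 else 0) ≤ 8 * (Fintype.card V : ℤ) ^ 4 := by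
  have h0 := sum_nonneg' A hO hT
  have h1 : ∑ u, ∑ v, (if A u v then defect A u v else 0) ≤ ∑ u, ∑ v,
      ∑ x, ∑ y, (quad (decide (A u v)) (decide (A v u)) (cd A u v x) (cd A u v y)
      + (bif decide (A u v) && bad A u v x y then 1 else 0)) :=
    Finset.sum_le_sum fun u _ => Finset.sum_le_sum fun v _ => defect_le A u v
  have h2 : ∑ x : Fin 4 → V, (phi (pat A x) 0 1 2 3 - 8 + 1000 * (bif isP A x then 1 else 0))
     = - ∑ u, ∑ v,
      ∑ x, ∑ y, (quad (decide (A u v)) (decide (A v u)) (cd A u v x) (cd A u v y)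
      + (bif decide (A u v) && bad A u v x y then 1 else 0)) := by
    rw [Fintype.sum_equiv tup _ (fun p : V × V × V × V => phi (pat A (tup.symm p)) 0 1 2 3 - 8 +
      1000 * (bif isP A (tup.symm p) then 1 else 0)) (fun x => by rw [Equiv.symm_apply_apply])]
    simp only [Fintype.sum_prod_type, ← Finset.sum_neg_distrib]
    refine Finset.sum_congr rfl fun u _ => Finset.sum_congr rfl fun v _ =>
      Finset.sum_congr rfl fun x _ => Finset.sum_congr rfl fun y _ => ?_
    change phi (pat A ![u, v, x, y]) 0 1 2 3 - 8 + 1000 * (bif isP A ![u, v, x, y] then 1 else 0) = _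
    rw [phi_le]
    cases isP A ![u, v, x, y] <;> simp <;> ring
  rw [Finset.sum_add_distrib, Finset.sum_sub_distrib, ← Finset.mul_sum] at h2
  simp only [Finset.sum_const, Finset.card_univ, Fintype.card_fun, Fintype.card_fin,
    nsmul_eq_mul] at h2
  push_cast at h2
  linarith

theorem numPaths_le (A : V → V → Prop) :
    (numPaths A 4 : ℤ) ≤ ∑ x : Fin 4 → V, (bif isP A x then 1 else 0) := by
  have hP : ∀ f : Fin 4 → V, (∀ i j : Fin 4, A (f i) (f j) ↔ (j : ℕ) = (i : ℕ) + 1) →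
      isP A f = true := by
    intro f hf
    simp [isP, pathInd, pat, hf]
  have h1 : (∑ x : Fin 4 → V, (bif isP A x then 1 else 0) : ℤ)
      = ((Finset.univ.filter fun x : Fin 4 → V => isP A x = true).card : ℤ) := by
    rw [Finset.card_filter]
    push_cast
    refine Finset.sum_congr rfl fun x _ => ?_
    cases isP A x <;> simp
  rw [h1]
  norm_cast
  unfold numPaths
  refine Finset.card_le_card_of_surjOn (fun f => Finset.univ.image f) ?_
  intro S hS
  rw [Finset.mem_coe, Finset.mem_filter] at hS
  obtain ⟨-, f, -, h2, h3⟩ := hS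
  refine ⟨f, ?_, ?_⟩
  · rw [Finset.mem_coe, Finset.mem_filter]
    exact ⟨Finset.mem_univ _, hP f h3⟩
  · ext v
    rw [h2]
    simp

end

end P4Stab

namespace P4Stab

section
variable {V : Type*} [Fintype V] [DecidableEq V]

theorem sum_partSize (g : V → Fin 5) : ∑ i, partSize g i = Fintype.card V := by
  unfold partSize
  rw [← Finset.card_univ, Finset.card_eq_sum_card_fiberwise (f := g) (t := Finset.univ)]
  simp

theorem rebalance (m : Fin 5 → ℕ) (hm : ∑ i, m i = Fintype.card V) :
    ∀ (k : ℕ) (g0 : V → Fin 5), ∑ i, (partSize g0 i - m i) = k →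
      ∃ g : V → Fin 5, (∀ i, partSize g i = m i) ∧
        (Finset.univ.filter fun x => g x ≠ g0 x).card ≤ k := by
  intro k
  induction k with
  | zero =>
    intro g0 h
    refine ⟨g0, ?_, by simp⟩
    have h1 := sum_partSize g0
    rw [← hm] at h1
    have h2 : ∀ i ∈ Finset.univ, partSize g0 i - m i = 0 := by
      rw [Finset.sum_eq_zero_iff] at h
      exact h
    have h3 : ∀ i ∈ Finset.univ, partSize g0 i ≤ m i := fun i hi => by have := h2 i hi; omega
    have h4 := (Finset.sum_eq_sum_iff_of_le h3).mp h1
    exact fun i => h4 i (Finset.mem_univ i)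
  | succ k ih =>
    intro g0 h
    have h1 := sum_partSize g0
    rw [← hm] at h1
    obtain ⟨i, hi⟩ : ∃ i, m i < partSize g0 i := by
      by_contra hc
      push Not at hc
      have : ∑ i, (partSize g0 i - m i) = 0 := Finset.sum_eq_zero fun i _ => by
        have := hc i; omega
      omega
    obtain ⟨j, hj⟩ : ∃ j, partSize g0 j < m j := by
      by_contra hc
      push Not at hc
      have := Finset.sum_lt_sum (s := Finset.univ) (fun i _ => hc i) ⟨i, Finset.mem_univ i, hi⟩
      omega
    have hij : i ≠ j := by rintro rfl; omega
    obtain ⟨x, hx⟩ : ∃ x, g0 x = i := by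
      have : 0 < partSize g0 i := by omega
      unfold partSize at this
      obtain ⟨x, hx⟩ := Finset.card_pos.mp this
      exact ⟨x, (Finset.mem_filter.mp hx).2⟩
    let g1 : V → Fin 5 := Function.update g0 x j
    have hgi : partSize g1 i + 1 = partSize g0 i := by
      unfold partSize
      have : (Finset.univ.filter fun v => g1 v = i) = (Finset.univ.filter fun v => g0 v = i).erase x := by
        ext v
        by_cases hv : v = x
        · subst hv; simp [g1, hij.symm]
        · simp [g1, Function.update_of_ne hv, hv]
      rw [this]
      exact Finset.card_erase_add_one (by simp [hx])
    have hgj : partSize g1 j = partSize g0 j + 1 := by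
      unfold partSize
      have : (Finset.univ.filter fun v => g1 v = j) = insert x (Finset.univ.filter fun v => g0 v = j) := by
        ext v
        by_cases hv : v = x
        · subst hv; simp [g1]
        · simp [g1, Function.update_of_ne hv, hv]
      rw [this]
      exact Finset.card_insert_of_notMem (by simp [hx, hij])
    have hgl : ∀ l, l ≠ i → l ≠ j → partSize g1 l = partSize g0 l := by
      intro l hl1 hl2
      unfold partSize
      congr 1
      ext v
      by_cases hv : v = x
      · subst hv; simp [g1, hx, hl1.symm, hl2.symm]
      · simp [g1, Function.update_of_ne hv]
    have hs : ∑ l, (partSize g1 l - m l) = k := by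
      have e1 : ∀ l, (partSize g0 l - m l) = (partSize g1 l - m l) + if l = i then 1 else 0 := by
        intro l
        by_cases h1 : l = i
        · subst h1; simp only [if_true]; omega
        · by_cases h2 : l = j
          · subst h2; simp only [h1, if_false]; omega
          · rw [hgl l h1 h2]; simp [h1]
      rw [Finset.sum_congr rfl fun l _ => e1 l, Finset.sum_add_distrib] at h
      simp at h
      exact h
    obtain ⟨g, hg1, hg2⟩ := ih g1 hs
    refine ⟨g, hg1, ?_⟩
    calc (Finset.univ.filter fun y => g y ≠ g0 y).card
        ≤ (insert x (Finset.univ.filter fun y => g y ≠ g1 y)).card := by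
          apply Finset.card_le_card
          intro y hy
          by_cases hv : y = x
          · simp [hv]
          · simp only [Finset.mem_insert, hv, false_or, Finset.mem_filter, Finset.mem_univ,
              true_and, g1, Function.update_of_ne hv, ne_eq] at hy ⊢
            exact hy
      _ ≤ _ := (Finset.card_insert_le _ _).trans (by omega)

theorem lg1_eq (c : ℕ) : lg1 c = 2 * (if kls c = 3 then 1 else 0) - (if kls c = 4 then 1 else 0)
    - (if kls c = 2 then 1 else 0) := by
  rcases c with _ | _ | _ | _ | _ | _ | _ | c <;> simp [lg1, kls]
theorem lg2_eq (c : ℕ) : lg2 c = 2 * (if kls c = 3 then 1 else 0) - (if kls c = 0 then 1 else 0)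
    - (if kls c = 1 then 1 else 0) := by
  rcases c with _ | _ | _ | _ | _ | _ | _ | c <;> simp [lg2, kls]
theorem lg4_eq (c : ℕ) : lg4 c = (if kls c = 4 then 1 else 0) - (if kls c = 2 then 1 else 0) := by
  rcases c with _ | _ | _ | _ | _ | _ | _ | c <;> simp [lg4, kls]
theorem lg5_eq (c : ℕ) : lg5 c = (if kls c = 0 then 1 else 0) - (if kls c = 1 then 1 else 0) := by
  rcases c with _ | _ | _ | _ | _ | _ | _ | c <;> simp [lg5, kls]
theorem kls_le (c : ℕ) : kls c ≤ 5 := by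
  unfold kls; split <;> simp

/-- size of a class -/
noncomputable def cs (A : V → V → Prop) (u v : V) (k : ℕ) : ℤ :=
  ∑ x, if kls (cd A u v x) = k then 1 else 0

/-- the part assigned to a vertex by the arc `u → v` -/
noncomputable def part (A : V → V → Prop) (u v : V) (x : V) : Fin 5 :=
  Fin.ofNat 5 (kls (cd A u v x))

noncomputable def nbad (A : V → V → Prop) (u v : V) : ℤ :=
  ∑ x, ∑ y, (bif bad A u v x y then 1 else 0)

theorem defect_eq (A : V → V → Prop) (u v : V) : defect A u v =
    8 * (2 * cs A u v 3 - cs A u v 4 - cs A u v 2) ^ 2 +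
    28 * (2 * cs A u v 3 - cs A u v 0 - cs A u v 1) ^ 2 +
    112 * (cs A u v 4 - cs A u v 2) ^ 2 + 28 * (cs A u v 0 - cs A u v 1) ^ 2 + nbad A u v := by
  simp only [defect, lg1_eq, lg2_eq, lg4_eq, lg5_eq, Finset.sum_sub_distrib, ← Finset.mul_sum]
  rfl

theorem cs_sum (A : V → V → Prop) (u v : V) : cs A u v 0 + cs A u v 1 + cs A u v 2 + cs A u v 3
    + cs A u v 4 + cs A u v 5 = Fintype.card V := by
  unfold cs
  simp only [← Finset.sum_add_distrib]
  rw [← Finset.card_univ, Finset.card_eq_sum_ones]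
  push_cast
  refine Finset.sum_congr rfl fun x _ => ?_
  have := kls_le (cd A u v x)
  generalize kls (cd A u v x) = k at *
  interval_cases k <;> simp

theorem cs_five (A : V → V → Prop) (u v : V) :
    cs A u v 5 * Fintype.card V ≤ nbad A u v := by
  unfold cs nbad
  rw [Finset.sum_mul]
  refine Finset.sum_le_sum fun x _ => ?_
  by_cases h : kls (cd A u v x) = 5
  · have : ∀ y, bad A u v x y = true := fun y => by
      have h5 : Nat.blt 5 5 = false := rfl
      simp [bad, okPair, h, h5]
    simp [h, this]
  · simp only [h, if_false, zero_mul]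
    exact Finset.sum_nonneg fun y _ => by cases bad A u v x y <;> simp

theorem cs_nonneg (A : V → V → Prop) (u v : V) (k : ℕ) : 0 ≤ cs A u v k :=
  Finset.sum_nonneg fun y _ => by split <;> simp

theorem part_size_le (A : V → V → Prop) (u v : V) (i : Fin 5) :
    (partSize (part A u v) i : ℤ) ≤ cs A u v i + cs A u v 5 := by
  unfold partSize cs
  rw [Finset.card_filter, ← Finset.sum_add_distrib]
  push_cast
  refine Finset.sum_le_sum fun x _ => ?_
  unfold part
  have := kls_le (cd A u v x)
  generalize kls (cd A u v x) = k at *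
  revert i
  interval_cases k <;> decide

theorem bad_false (A : V → V → Prop) (u v x y : V) (h : bad A u v x y = false) :
    A x y ↔ part A u v y = part A u v x + 1 := by
  unfold bad okPair at h
  unfold part
  have h1 := kls_le (cd A u v x)
  have h2 := kls_le (cd A u v y)
  generalize kls (cd A u v x) = k at *
  generalize kls (cd A u v y) = l at *
  by_cases ha : A x y <;> simp only [ha, decide_true, decide_false, true_iff, false_iff] at h ⊢ <;>
    interval_cases k <;> interval_cases l <;> revert h <;> decide

end

theorem pairDiff_le {n : ℕ} (A : Fin n → Fin n → Prop) (u v : Fin n) (g : Fin n → Fin 5) :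
    (pairDiff A (fun x y => g y = g x + 1) : ℤ) ≤ 2 * nbad A u v
      + 2 * (n * (Finset.univ.filter fun x => g x ≠ part A u v x).card) := by
  have hb : nbad A u v = ((Finset.univ.filter fun p : Fin n × Fin n =>
      bad A u v p.1 p.2 = true).card : ℤ) := by
    unfold nbad
    rw [Finset.card_filter, Fintype.sum_prod_type]
    push_cast
    refine Finset.sum_congr rfl fun x _ => Finset.sum_congr rfl fun y _ => ?_
    cases bad A u v x y <;> simp
  rw [hb]
  norm_cast
  set W := Finset.univ.filter fun x => g x ≠ part A u v x with hW
  set S := Finset.univ.filter fun p : Fin n × Fin n => bad A u v p.1 p.2 = true with hS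
  have hsub : pairDiff A (fun x y => g y = g x + 1) ≤
      ((S ∪ S.image Prod.swap) ∪ (W ×ˢ Finset.univ ∪ Finset.univ ×ˢ W)).card := by
    unfold pairDiff
    apply Finset.card_le_card
    rintro ⟨x, y⟩ hp
    simp only [Finset.mem_filter, Finset.mem_univ, true_and] at hp
    by_contra hc
    simp only [Finset.mem_union, not_or, Finset.mem_product, Finset.mem_univ, and_true, true_and,
      hW, hS, Finset.mem_filter, Finset.mem_image, not_exists, not_and, Prod.forall, not_not,
      ne_eq] at hc
    obtain ⟨⟨h1, h2⟩, h3, h4⟩ := hc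
    have h2' : bad A u v y x = false := by
      by_contra h
      exact h2 y x (by simpa using h) rfl
    have h1' : bad A u v x y = false := by simpa using h1
    apply hp.2
    rw [h3, h4]
    exact ⟨bad_false A u v x y h1', bad_false A u v y x h2'⟩
  refine hsub.trans ?_
  refine (Finset.card_union_le _ _).trans ?_
  have e1 := Finset.card_union_le S (S.image Prod.swap)
  have e2 : (S.image Prod.swap).card ≤ S.card := Finset.card_image_le
  have e3 := Finset.card_union_le (W ×ˢ (Finset.univ : Finset (Fin n))) (Finset.univ ×ˢ W)
  have e4 : (W ×ˢ (Finset.univ : Finset (Fin n))).card = n * W.card := by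
    rw [Finset.card_product]; simp [mul_comm]
  have e5 : ((Finset.univ : Finset (Fin n)) ×ˢ W).card = n * W.card := by
    rw [Finset.card_product]; simp
  omega

theorem bounds (N0 N1 N2 N3 N4 N5 b s n : ℝ) (hn : 0 < n) (hs0 : 0 ≤ s) (hs1 : s ≤ 1)
    (hd : 8 * (2 * N3 - N4 - N2) ^ 2 + 28 * (2 * N3 - N0 - N1) ^ 2 + 112 * (N4 - N2) ^ 2 +
      28 * (N0 - N1) ^ 2 + b ≤ s ^ 2 * n ^ 2)
    (hcs : N0 + N1 + N2 + N3 + N4 + N5 = n) (hc5 : N5 * n ≤ b) (hb : 0 ≤ b) (c0 : 0 ≤ N5) :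
    b ≤ s * n ^ 2 ∧ N0 + N5 ≤ n / 5 + 3 * (s * n) ∧ N1 + N5 ≤ n / 5 + 3 * (s * n) ∧
      N2 + N5 ≤ n / 5 + 3 * (s * n) ∧ N3 + N5 ≤ n / 5 + 3 * (s * n) ∧
      N4 + N5 ≤ n / 5 + 3 * (s * n) := by
  have hsn : 0 ≤ s * n := by positivity
  have hsq : (s * n) ^ 2 = s ^ 2 * n ^ 2 := by ring
  have p1 := sq_nonneg (2 * N3 - N4 - N2)
  have p2 := sq_nonneg (2 * N3 - N0 - N1)
  have p3 := sq_nonneg (N4 - N2)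
  have p4 := sq_nonneg (N0 - N1)
  have q1 : |2 * N3 - N4 - N2| ≤ s * n := abs_le_of_sq_le_sq (by linarith) hsn
  have q2 : |2 * N3 - N0 - N1| ≤ s * n := abs_le_of_sq_le_sq (by linarith) hsn
  have q3 : |N4 - N2| ≤ s * n := abs_le_of_sq_le_sq (by linarith) hsn
  have q4 : |N0 - N1| ≤ s * n := abs_le_of_sq_le_sq (by linarith) hsn
  have q5 : b ≤ s ^ 2 * n ^ 2 := by linarith
  have hss : s ^ 2 ≤ s := by nlinarith
  have q5' : b ≤ s * n ^ 2 := q5.trans (by gcongr)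
  have q6 : N5 ≤ s * n := by
    have : N5 * n ≤ (s * n) * n := by nlinarith
    exact le_of_mul_le_mul_right this hn
  rw [abs_le] at q1 q2 q3 q4
  obtain ⟨q1, q1'⟩ := q1
  obtain ⟨q2, q2'⟩ := q2
  obtain ⟨q3, q3'⟩ := q3
  obtain ⟨q4, q4'⟩ := q4
  refine ⟨q5', ?_, ?_, ?_, ?_, ?_⟩ <;> linarith

/-- From a good arc to a balanced blow-up. -/
theorem finish {n : ℕ} (A : Fin n → Fin n → Prop) (u v : Fin n) (s : ℝ) (hs0 : 0 ≤ s)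
    (hs1 : s ≤ 1) (hd : (defect A u v : ℝ) ≤ s ^ 2 * (n : ℝ) ^ 2) :
    ∃ B : Fin n → Fin n → Prop, IsBalancedBlowupC5 B ∧
      (pairDiff A B : ℝ) ≤ 32 * s * (n : ℝ) ^ 2 + 10 * n := by
  have hn : (0 : ℝ) < n := by
    have : 0 < n := lt_of_le_of_lt (Nat.zero_le _) u.2
    exact_mod_cast this
  have hsum : ∑ i : Fin 5, (n + (i : ℕ)) / 5 = Fintype.card (Fin n) := by
    simp [Fin.sum_univ_five]; omega
  obtain ⟨g, hg1, hg2⟩ := rebalance (V := Fin n) (fun i => (n + (i : ℕ)) / 5) hsum _ (part A u v) rfl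
  refine ⟨fun x y => g y = g x + 1, ⟨g, fun _ _ => Iff.rfl, fun i j => ?_⟩, ?_⟩
  · rw [hg1, hg1]
    have := i.2; have := j.2
    omega
  have hde := defect_eq A u v
  have hcs := cs_sum A u v
  have hc5 := cs_five A u v
  have hps := part_size_le A u v
  have hpd := pairDiff_le A u v g
  have hnb : 0 ≤ nbad A u v :=
    Finset.sum_nonneg fun x _ => Finset.sum_nonneg fun y _ => by cases bad A u v x y <;> simp
  rw [hde] at hd
  push_cast at hd
  rw [Fintype.card_fin] at hcs hc5
  have hcs' : (cs A u v 0 : ℝ) + cs A u v 1 + cs A u v 2 + cs A u v 3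
    + cs A u v 4 + cs A u v 5 = n := by exact_mod_cast hcs
  have hc5' : (cs A u v 5 : ℝ) * n ≤ nbad A u v := by exact_mod_cast hc5
  have hnb' : (0 : ℝ) ≤ nbad A u v := by exact_mod_cast hnb
  have c0 : (0 : ℝ) ≤ cs A u v 5 := by exact_mod_cast cs_nonneg A u v 5
  obtain ⟨q5', b0, b1, b2, b3, b4⟩ := bounds _ _ _ _ _ _ _ s n hn hs0 hs1 hd hcs' hc5' hnb' c0
  have hi : ∀ i : Fin 5, (partSize (part A u v) i : ℝ) ≤ n / 5 + 3 * (s * n) := by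
    intro i
    have h1 : ((partSize (part A u v) i : ℤ) : ℝ) ≤ ((cs A u v i + cs A u v 5 : ℤ) : ℝ) :=
      Int.cast_le.mpr (hps i)
    rw [Int.cast_natCast, Int.cast_add] at h1
    refine h1.trans ?_
    match i with
    | 0 => exact b0
    | 1 => exact b1
    | 2 => exact b2
    | 3 => exact b3
    | 4 => exact b4
  clear hd hcs' hc5' hnb' c0 hde hcs hc5 hps hnb b0 b1 b2 b3 b4
  have hmv : ((∑ i : Fin 5, (partSize (part A u v) i - (n + (i : ℕ)) / 5) : ℕ) : ℝ)
      ≤ 15 * (s * n) + 5 := by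
    push_cast
    have : ∀ i ∈ (Finset.univ : Finset (Fin 5)),
        ((partSize (part A u v) i - (n + (i : ℕ)) / 5 : ℕ) : ℝ) ≤ 3 * (s * n) + 1 := by
      intro i _
      rcases le_total (partSize (part A u v) i) ((n + (i : ℕ)) / 5) with h | h
      · rw [Nat.sub_eq_zero_of_le h]; simp only [Nat.cast_zero]; positivity
      · rw [Nat.cast_sub h]
        have h5 : n ≤ 5 * ((n + (i : ℕ)) / 5) + 5 := by omega
        have h5' : (n : ℝ) ≤ 5 * (((n + (i : ℕ)) / 5 : ℕ) : ℝ) + 5 := by exact_mod_cast h5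
        have := hi i
        linarith
    refine (Finset.sum_le_sum this).trans ?_
    simp
    linarith
  have hg2' : ((Finset.univ.filter fun x => g x ≠ part A u v x).card : ℝ) ≤ 15 * (s * n) + 5 :=
    le_trans (by exact_mod_cast hg2) hmv
  have hpd' : (pairDiff A (fun x y => g y = g x + 1) : ℝ) ≤ 2 * nbad A u v
      + 2 * (n * (Finset.univ.filter fun x => g x ≠ part A u v x).card) := by
    exact_mod_cast hpd
  have := mul_le_mul_of_nonneg_left hg2' hn.le
  have e : (n : ℝ) * (15 * (s * n) + 5) = 15 * (s * (n : ℝ) ^ 2) + 5 * n := by ring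
  linarith

/-- Existence of a good arc. -/
theorem exists_arc {n : ℕ} (A : Fin n → Fin n → Prop) (hO : IsOriented A) (hT : T3Free A)
    (κ : ℝ) (h0 : 0 < κ) (h1 : κ ≤ 1) (hn : 0 < n)
    (hN : (8 - κ / 150) * (n : ℝ) ^ 4 ≤ 1000 * (numPaths A 4 : ℝ)) :
    ∃ u v, (defect A u v : ℝ) ≤ κ * (n : ℝ) ^ 2 := by
  by_contra hc
  push Not at hc
  have hm := main_ineq A hO hT
  have hle := numPaths_le A
  rw [Fintype.card_fin] at hm
  have hE : ∑ x : Fin 4 → Fin n, (bif isP A x then (1 : ℤ) else 0) ≤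
      ∑ u, ∑ v, (if A u v then (n : ℤ) ^ 2 else 0) := by
    rw [Fintype.sum_equiv tup _ (fun p : Fin n × Fin n × Fin n × Fin n =>
      (bif isP A (tup.symm p) then (1 : ℤ) else 0)) (fun x => by rw [Equiv.symm_apply_apply])]
    simp only [Fintype.sum_prod_type]
    refine Finset.sum_le_sum fun u _ => Finset.sum_le_sum fun v _ => ?_
    by_cases h : A u v
    · simp only [h, if_true]
      calc _ ≤ ∑ x : Fin n, ∑ y : Fin n, (1 : ℤ) := Finset.sum_le_sum fun x _ =>
            Finset.sum_le_sum fun y _ => by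
              cases isP A (tup.symm (u, v, x, y)) <;> simp
        _ = _ := by simp [pow_two]
    · have : ∀ x y, isP A (tup.symm (u, v, x, y)) = false := by
        intro x y
        change isP A ![u, v, x, y] = false
        have h01 : pat A ![u, v, x, y] 0 1 = false := by simp [pat, h]
        simp [isP, pathInd, h01]
      simp [h, this]
  have hD : (∑ u, ∑ v, (if A u v then κ * (n : ℝ) ^ 2 else 0)) ≤
      ∑ u, ∑ v, (if A u v then (defect A u v : ℝ) else 0) :=
    Finset.sum_le_sum fun u _ => Finset.sum_le_sum fun v _ => by
      split
      · exact (hc u v).le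
      · exact le_rfl
  have hm' : (∑ u, ∑ v, (if A u v then (defect A u v : ℝ) else 0)) +
      1000 * ((∑ x : Fin 4 → Fin n, (bif isP A x then (1 : ℤ) else 0) : ℤ) : ℝ)
        ≤ 8 * (n : ℝ) ^ 4 := by
    have : ((∑ u, ∑ v, (if A u v then defect A u v else 0) : ℤ) : ℝ) +
      1000 * ((∑ x : Fin 4 → Fin n, (bif isP A x then (1 : ℤ) else 0) : ℤ) : ℝ)
        ≤ 8 * (n : ℝ) ^ 4 := by exact_mod_cast hm
    refine le_trans (le_of_eq ?_) this
    congr 1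
    push_cast
    rfl
  have hle' : (numPaths A 4 : ℝ) ≤
    ((∑ x : Fin 4 → Fin n, (bif isP A x then (1 : ℤ) else 0) : ℤ) : ℝ) := by exact_mod_cast hle
  have hE' : ((∑ x : Fin 4 → Fin n, (bif isP A x then (1 : ℤ) else 0) : ℤ) : ℝ) ≤
      ∑ u, ∑ v, (if A u v then (n : ℝ) ^ 2 else 0) := by
    have : ((∑ x : Fin 4 → Fin n, (bif isP A x then (1 : ℤ) else 0) : ℤ) : ℝ) ≤
      ((∑ u, ∑ v, (if A u v then (n : ℤ) ^ 2 else 0) : ℤ) : ℝ) := by exact_mod_cast hE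
    refine this.trans (le_of_eq ?_)
    push_cast
    rfl
  have hK : (∑ u, ∑ v, (if A u v then κ * (n : ℝ) ^ 2 else 0)) =
      κ * ∑ u, ∑ v, (if A u v then (n : ℝ) ^ 2 else 0) := by
    simp only [Finset.mul_sum, mul_ite, mul_zero]
  rw [hK] at hD
  set S := ((∑ x : Fin 4 → Fin n, (bif isP A x then (1 : ℤ) else 0) : ℤ) : ℝ)
  set E := ∑ u, ∑ v, (if A u v then (n : ℝ) ^ 2 else 0)
  have hn4 : (0 : ℝ) < (n : ℝ) ^ 4 := by positivity
  have e1 : κ * S ≤ κ * E := by gcongr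
  have e2 : κ * ((8 - κ / 150) * (n : ℝ) ^ 4) ≤ κ * (1000 * S) := by
    apply mul_le_mul_of_nonneg_left _ h0.le
    linarith
  have e3 : κ * (κ / 150 * (n : ℝ) ^ 4) ≤ 1 * (κ / 150 * (n : ℝ) ^ 4) := by gcongr
  have e4 : 0 < κ * (n : ℝ) ^ 4 := by positivity
  nlinarith

end P4Stab

open P4Stab

/-- **stability.** For every `ε > 0` there are `n₀` and `ε' > 0` such that
every `T⃗₃`-free oriented graph on `n ≥ n₀` vertices with `d_{P⃗₄} ≥ 24/125 − ε'` can be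
turned into a graph isomorphic to `C⃗₅(n)` (i.e. a balanced blow-up of the directed
5-cycle) by changing at most `ε n²` pairs of vertices. -/
theorem stability_P4_T3free :
    ∀ ε : ℝ, 0 < ε → ∃ (n₀ : ℕ) (ε' : ℝ), 0 < ε' ∧
      ∀ n : ℕ, n₀ ≤ n → ∀ A : Fin n → Fin n → Prop, IsOriented A → T3Free A →
        24 / 125 - ε' ≤ pathDensity A 4 →
        ∃ B : Fin n → Fin n → Prop, IsBalancedBlowupC5 B ∧
          (pairDiff A B : ℝ) ≤ ε * (n : ℝ) ^ 2 := by
  intro ε hε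
  set s : ℝ := min 1 (ε / 64) with hs
  have hs0 : 0 < s := lt_min one_pos (by positivity)
  have hs1 : s ≤ 1 := min_le_left _ _
  have hs2 : s ≤ ε / 64 := min_le_right _ _
  set η : ℝ := s ^ 2 / 150 with hη
  have hη0 : 0 < η := by positivity
  obtain ⟨n₀, hn₀⟩ := exists_nat_ge (max 4 (max (192 / η) (20 / ε)))
  refine ⟨n₀, η / 84, by positivity, ?_⟩
  intro n hn A hO hT hdens
  have hnn : (n₀ : ℝ) ≤ n := by exact_mod_cast hn
  have hn4 : (4 : ℝ) ≤ n := ((le_max_left _ _).trans hn₀).trans hnn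
  have hn1 : 192 / η ≤ n := (((le_max_left _ _).trans (le_max_right _ _)).trans hn₀).trans hnn
  have hn2 : 20 / ε ≤ n := (((le_max_right _ _).trans (le_max_right _ _)).trans hn₀).trans hnn
  have hn4' : 4 ≤ n := by exact_mod_cast hn4
  rw [div_le_iff₀ hη0] at hn1
  rw [div_le_iff₀ hε] at hn2
  have hc1 : (24 : ℝ) * (n.choose 4 : ℝ) ≤ (n : ℝ) ^ 4 := by
    have h := Nat.descFactorial_le_pow n 4
    rw [Nat.descFactorial_eq_factorial_mul_choose] at h
    have h' : 24 * n.choose 4 ≤ n ^ 4 := h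
    exact_mod_cast h'
  have hc2 : ((n : ℝ) - 3) ^ 4 ≤ 24 * (n.choose 4 : ℝ) := by
    have h := Nat.pow_sub_le_descFactorial n 4
    rw [Nat.descFactorial_eq_factorial_mul_choose] at h
    have h' : (n - 3) ^ 4 ≤ 24 * n.choose 4 := h
    have h'' : (((n - 3 : ℕ) : ℝ)) ^ 4 ≤ 24 * (n.choose 4 : ℝ) := by exact_mod_cast h'
    rw [Nat.cast_sub (by omega)] at h''
    exact_mod_cast h''
  have hc3 : (n : ℝ) ^ 4 - 12 * (n : ℝ) ^ 3 ≤ ((n : ℝ) - 3) ^ 4 := by nlinarith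
  have hcpos : (0 : ℝ) < (n.choose 4 : ℝ) := by
    exact_mod_cast Nat.choose_pos hn4'
  unfold pathDensity at hdens
  rw [Fintype.card_fin, le_div_iff₀ hcpos] at hdens
  have hη3 : 192 * (n : ℝ) ^ 3 ≤ η * (n : ℝ) ^ 4 := by
    have : 192 * (n : ℝ) ^ 3 ≤ (n * η) * (n : ℝ) ^ 3 := by gcongr
    nlinarith
  have hηc : η * (24 * (n.choose 4 : ℝ)) ≤ η * (n : ℝ) ^ 4 := by gcongr
  obtain ⟨u, v, huv⟩ := exists_arc A hO hT (s ^ 2) (by positivity) (by nlinarith) (by omega) (by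
    rw [← hη]
    nlinarith)
  obtain ⟨B, hB, hBd⟩ := finish A u v s hs0.le hs1 huv
  refine ⟨B, hB, hBd.trans ?_⟩
  have e1 : s * (n : ℝ) ^ 2 ≤ ε / 64 * (n : ℝ) ^ 2 := by gcongr
  have e2 : 20 * (n : ℝ) ≤ (n * ε) * n := by gcongr
  nlinarith
end
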